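/- arXiv:1302.6904 — 2 statements merged into one kernel-verified Lean document; each statement's English description precedes it below -/
import Mathlib

section
/- Let p be an odd prime, q a power of p, and let P be a Sylow p-subgroup of the symplectic group Sp_4(F_q). Then the number of conjugacy classes of P equals 2v² + 4v + 1, where v = q − 1. -/
/-!
For matrices that are triangular with respect to a total order of the coordinates, being unipotent
and having `p`-power order are the same thing in characteristic `p`, and a symplectic matrix that
normalizes the unitriangular symplectic group `U` is triangular. So every `p`-element of the
normalizer of `U` lies in `U`; as a proper subgroup of a finite `p`-group is strictly smaller than
its normalizer there, `U` is a Sylow `p`-subgroup.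

For `Sp₄` the group `U` consists of the matrices with blocks `[[1, a], [0, 1]]`,
`[[x, y], [y - a z, z]]`, `0` and `[[1, 0], [-a, 1]]`. Away from characteristic two the sum
`w = 2 y - a z` of the off-diagonal entries of the second block can replace `y` as a coordinate, and
then `(a, x, w, z)` and `(a', x', w', z')` commute exactly when `a (w', z') = a' (w, z)`. For given
`(a, a')` these equations have `q²` solutions, or `q⁴` if `a = a' = 0`, so that `U`, of order `q⁴`,
has `q² (q⁴ + (q² - 1) q²)` commuting pairs and hence `2 q² - 1` conjugacy classes.
-/

open Matrix Polynomial

section Group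

variable {G H : Type*} [Group G] [Group H]

lemma card_conjClasses_congr (e : G ≃* H) :
    Nat.card (ConjClasses G) = Nat.card (ConjClasses H) :=
  Nat.card_congr <| Quotient.congr e.toEquiv fun g h =>
    ⟨fun hgh => e.toMonoidHom.map_isConj hgh,
      fun hgh => show IsConj g h by simpa using e.symm.toMonoidHom.map_isConj hgh⟩

lemma exists_mem_normalizer_notMem_of_lt {p : ℕ} [Fact p.Prime] {H Q : Subgroup G} [Finite Q]
    (hQ : IsPGroup p Q) (hlt : H < Q) : ∃ g ∈ Q, g ∈ Subgroup.normalizer H ∧ g ∉ H := by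
  have : Group.IsNilpotent Q := hQ.isNilpotent
  have hproper : H.subgroupOf Q < ⊤ := by
    rw [lt_top_iff_ne_top, Ne, Subgroup.subgroupOf_eq_top]
    exact hlt.not_ge
  obtain ⟨g, hgN, hgH⟩ :=
    SetLike.exists_of_lt (Group.normalizerCondition_of_isNilpotent _ hproper)
  rw [← Subgroup.subgroupOf_normalizer_eq hlt.le] at hgN
  exact ⟨g, g.2, Subgroup.mem_subgroupOf.1 hgN, hgH⟩

theorem exists_sylow_eq_of_normalizer [Finite G] {p : ℕ} [Fact p.Prime] {H : Subgroup G}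
    (hH : IsPGroup p H)
    (hN : ∀ g ∈ Subgroup.normalizer H, ∀ k : ℕ, g ^ p ^ k = 1 → g ∈ H) :
    ∃ P : Sylow p G, (P : Subgroup G) = H := by
  obtain ⟨P, hHP⟩ := hH.exists_le_sylow
  refine ⟨P, (hHP.eq_of_not_lt fun hlt => ?_).symm⟩
  obtain ⟨g, hgP, hgN, hgH⟩ := exists_mem_normalizer_notMem_of_lt P.isPGroup' hlt
  obtain ⟨k, hk⟩ := P.isPGroup' ⟨g, hgP⟩
  exact hgH (hN g hgN k (congrArg Subtype.val hk))

end Group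

section Counting

variable {K V : Type*} [Field K] [AddCommGroup V] [Module K V]

/-- For `(a, a') ≠ 0`, the solutions `(u, u')` of `a • u' = a' • u` are the multiples
`(a • t, a' • t)`. -/
lemma card_smul_eq_smul_of_ne_zero {a a' : K} (h : ¬(a = 0 ∧ a' = 0)) :
    Nat.card {u : V × V // a • u.2 = a' • u.1} = Nat.card V := by
  let f (t : V) : {u : V × V // a • u.2 = a' • u.1} := ⟨(a • t, a' • t), smul_comm _ _ _⟩
  refine (Nat.card_congr (Equiv.ofBijective f ⟨fun s t hst => ?_, ?_⟩)).symm
  · obtain ⟨h₁, h₂⟩ : a • s = a • t ∧ a' • s = a' • t := by simpa [f] using hst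
    rcases not_and_or.1 h with ha | ha
    · exact smul_right_injective V ha h₁
    · exact smul_right_injective V ha h₂
  · rintro ⟨⟨u, u'⟩, hu : a • u' = a' • u⟩
    rcases not_and_or.1 h with ha | ha
    · exact ⟨a⁻¹ • u, by simp [f, ha, smul_comm a' a⁻¹ u, ← hu]⟩
    · exact ⟨a'⁻¹ • u', by simp [f, ha, smul_comm a a'⁻¹ u', hu]⟩

theorem card_smul_eq_smul [Finite K] [Finite V] :
    Nat.card {p : (K × V) × (K × V) // p.1.1 • p.2.2 = p.2.1 • p.1.2} =
      Nat.card V * (Nat.card V + (Nat.card K ^ 2 - 1)) := by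
  classical
  have := Fintype.ofFinite K
  let fiber (c : K × K) : Type _ := {u : V × V // c.1 • u.2 = c.2 • u.1}
  let e : {p : (K × V) × (K × V) // p.1.1 • p.2.2 = p.2.1 • p.1.2} ≃ Σ c, fiber c :=
    { toFun p := ⟨(p.1.1.1, p.1.2.1), (p.1.1.2, p.1.2.2), p.2⟩
      invFun s := ⟨((s.1.1, s.2.1.1), (s.1.2, s.2.1.2)), s.2.2⟩ }
  have hzero : Nat.card (fiber 0) = Nat.card V * Nat.card V := by
    simp [fiber]
  have hne (c : K × K) (hc : c ∈ Finset.univ.erase 0) : Nat.card (fiber c) = Nat.card V :=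
    card_smul_eq_smul_of_ne_zero fun h => Finset.ne_of_mem_erase hc (Prod.ext h.1 h.2)
  have (c : K × K) : Finite (fiber c) := Subtype.finite
  rw [Nat.card_congr e, Nat.card_sigma, ← Finset.add_sum_erase _ _ (Finset.mem_univ 0), hzero,
    Finset.sum_congr rfl hne, Finset.sum_const, Finset.card_erase_of_mem (Finset.mem_univ _),
    Finset.card_univ, Fintype.card_prod, ← Nat.card_eq_fintype_card, smul_eq_mul, ← sq (Nat.card K)]
  ring

theorem card_conjClasses_mul_card_of_commute_iff {G X : Type*} [Group G] [Finite K] [Finite V]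
    [Finite X] (e : G ≃ X × K × V)
    (he : ∀ g h, Commute g h ↔ (e g).2.1 • (e h).2.2 = (e h).2.1 • (e g).2.2) :
    Nat.card (ConjClasses G) * Nat.card K =
      Nat.card X * (Nat.card V + (Nat.card K ^ 2 - 1)) := by
  let commutingPairs : {p : G × G // Commute p.1 p.2} ≃
      (X × X) × {p : (K × V) × (K × V) // p.1.1 • p.2.2 = p.2.1 • p.1.2} :=
    { toFun p := (((e p.1.1).1, (e p.1.2).1), ⟨((e p.1.1).2, (e p.1.2).2), (he _ _).1 p.2⟩)
      invFun s := ⟨(e.symm (s.1.1, s.2.1.1), e.symm (s.1.2, s.2.1.2)), (he _ _).2 <| by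
        simpa using s.2.2⟩
      left_inv p := by simp
      right_inv s := by simp }
  have hcard := card_comm_eq_card_conjClasses_mul_card G
  have hX : 0 < Nat.card X := have : Nonempty X := ⟨(e 1).1⟩; Nat.card_pos
  rw [Nat.card_congr commutingPairs, Nat.card_congr e] at hcard
  simp only [Nat.card_prod, card_smul_eq_smul] at hcard
  refine Nat.eq_of_mul_eq_mul_right (Nat.mul_pos hX (Nat.card_pos (α := V))) ?_
  linarith

end Counting

section Triangular

variable {m α R : Type*} [LinearOrder α] [CommRing R] {b : m → α} {M N : Matrix m m R}

/-- Upper unitriangular square matrices, where a map `b` to an ordered type (injective in all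
applications) provides the order of the rows and columns. -/
structure IsUnitriangular {m α R : Type*} [LT α] [Zero R] [One R] (b : m → α)
    (M : Matrix m m R) : Prop where
  blockTriangular : M.BlockTriangular b
  apply_diag (i : m) : M i i = 1

lemma isUnitriangular_one [DecidableEq m] : IsUnitriangular b (1 : Matrix m m R) :=
  ⟨blockTriangular_one, fun _ => one_apply_eq _⟩

lemma isUnitriangular_transvection [DecidableEq m] {i j : m} (hij : b i < b j) (c : R) :
    IsUnitriangular b (transvection i j c) where
  blockTriangular := blockTriangular_transvection hij.le c
  apply_diag k := by
    have : ¬(i = k ∧ j = k) := fun h => hij.ne (by rw [h.1, h.2])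
    simp [transvection, this]

variable [Fintype m]

lemma mul_apply_diag_of_blockTriangular (hb : b.Injective) (hM : M.BlockTriangular b)
    (hN : N.BlockTriangular b) (i : m) : (M * N) i i = M i i * N i i := by
  rw [Matrix.mul_apply]
  refine Finset.sum_eq_single i (fun k _ hki => ?_) (by simp)
  rcases (hb.ne hki).lt_or_gt with hlt | hlt
  · rw [hM hlt, zero_mul]
  · rw [hN hlt, mul_zero]

lemma IsUnitriangular.mul (hb : b.Injective) (hM : IsUnitriangular b M)
    (hN : IsUnitriangular b N) : IsUnitriangular b (M * N) where
  blockTriangular := hM.blockTriangular.mul hN.blockTriangular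
  apply_diag i := by
    rw [mul_apply_diag_of_blockTriangular hb hM.blockTriangular hN.blockTriangular,
      hM.apply_diag, hN.apply_diag, mul_one]

variable [DecidableEq m]

lemma pow_apply_diag_of_blockTriangular (hb : b.Injective) (hM : M.BlockTriangular b) (k : ℕ)
    (i : m) : (M ^ k) i i = M i i ^ k := by
  induction k with
  | zero => simp
  | succ k ih => rw [pow_succ, mul_apply_diag_of_blockTriangular hb (hM.pow k) hM, ih, pow_succ]

lemma charpoly_of_blockTriangular (hb : b.Injective) (hM : M.BlockTriangular b) :
    M.charpoly = ∏ i, (X - C (M i i)) :=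
  let := LinearOrder.lift' b hb
  charpoly_of_isUpperTriangular M hM

lemma IsUnitriangular.inv (hb : b.Injective) (hM : IsUnitriangular b M) (hdet : IsUnit M.det) :
    IsUnitriangular b M⁻¹ := by
  let := M.invertibleOfIsUnitDet hdet
  have hinv : M⁻¹.BlockTriangular b := blockTriangular_inv_of_blockTriangular hM.blockTriangular
  refine ⟨hinv, fun i => ?_⟩
  have hdiag := mul_apply_diag_of_blockTriangular hb hM.blockTriangular hinv i
  rwa [M.mul_nonsing_inv hdet, one_apply_eq, hM.apply_diag, one_mul, eq_comm] at hdiag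

lemma IsUnitriangular.exists_pow_eq_one {p : ℕ} [Fact p.Prime] [CharP R p] (hb : b.Injective)
    (hM : IsUnitriangular b M) : ∃ k : ℕ, M ^ p ^ k = 1 := by
  have hnilpotent : (M - 1) ^ Fintype.card m = 0 := by
    simpa [charpoly_of_blockTriangular hb hM.blockTriangular, hM.apply_diag] using
      M.aeval_self_charpoly
  refine ⟨Fintype.card m, sub_eq_zero.1 ?_⟩
  rcases isEmpty_or_nonempty m with hm | hm
  · exact Subsingleton.elim _ _
  · rw [← one_pow (M := Matrix m m R) (p ^ Fintype.card m),
      ← sub_pow_char_pow_of_commute _ _ (Commute.one_right M)]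
    exact pow_eq_zero_of_le (Nat.lt_pow_self (Fact.out (p := p.Prime)).one_lt).le hnilpotent

lemma isUnitriangular_of_pow_eq_one [IsReduced R] {p k : ℕ} [Fact p.Prime] [CharP R p]
    (hb : b.Injective) (hM : M.BlockTriangular b) (hpow : M ^ p ^ k = 1) :
    IsUnitriangular b M := by
  refine ⟨hM, fun i => iterateFrobenius_inj R p k ?_⟩
  rw [map_one, iterateFrobenius_def, ← pow_apply_diag_of_blockTriangular hb hM, hpow, one_apply_eq]

end Triangular

section Symplectic

/-- The order `e₁ < e₂ < ⋯ < f₂ < f₁` of the standard symplectic basis, in which every initial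
segment spans an isotropic subspace or the orthogonal complement of one. -/
def flagOrder (ι : Type*) : ι ⊕ ι → ι ⊕ₗ ιᵒᵈ :=
  toLex ∘ Sum.map id OrderDual.toDual

lemma flagOrder_injective {ι : Type*} : (flagOrder ι).Injective :=
  toLex.injective.comp (Function.injective_id.sumMap OrderDual.toDual.injective)

variable {ι R : Type*} [LinearOrder ι] [CommRing R]

lemma isUnitriangular_fromBlocks_iff {A B C D : Matrix ι ι R} :
    IsUnitriangular (flagOrder ι) (fromBlocks A B C D) ↔
      C = 0 ∧ IsUnitriangular id A ∧ IsUnitriangular OrderDual.toDual D := by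
  constructor
  · rintro ⟨htri, hdiag⟩
    refine ⟨?_, ⟨fun i j hij => ?_, fun i => hdiag (.inl i)⟩,
      ⟨fun i j hij => ?_, fun i => hdiag (.inr i)⟩⟩
    · ext i j
      exact htri (i := .inr i) (j := .inl j) (Sum.Lex.inl_lt_inr _ _)
    · exact htri (i := .inl i) (j := .inl j) (Sum.Lex.inl_lt_inl_iff.2 hij)
    · exact htri (i := .inr i) (j := .inr j) (Sum.Lex.inr_lt_inr_iff.2 hij)
  · rintro ⟨rfl, hA, hD⟩
    refine ⟨?_, Sum.rec hA.apply_diag hD.apply_diag⟩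
    rintro (i | i) (j | j) hij
    · exact hA.blockTriangular (Sum.Lex.inl_lt_inl_iff.1 hij)
    · exact absurd hij Sum.Lex.not_inr_lt_inl
    · rfl
    · exact hD.blockTriangular (Sum.Lex.inr_lt_inr_iff.1 hij)

variable [Fintype ι]

/-- The group of unitriangular symplectic matrices with respect to `flagOrder`: the standard
maximal unipotent subgroup of the symplectic group. -/
def unitriangularSymplecticGroup (ι R : Type*) [LinearOrder ι] [Fintype ι] [CommRing R] :
    Subgroup (symplecticGroup ι R) where
  carrier := {g | IsUnitriangular (flagOrder ι) (g : Matrix (ι ⊕ ι) (ι ⊕ ι) R)}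
  one_mem' := isUnitriangular_one
  mul_mem' hg hh := hg.mul flagOrder_injective hh
  inv_mem' {g} hg := by
    rw [Set.mem_ofPred_eq, SymplecticGroup.coe_inv']
    exact hg.inv flagOrder_injective (SymplecticGroup.symplectic_det g.2)

lemma exists_mem_unitriangularSymplecticGroup_eq_transvection {a b : ι} (hab : a < b) :
    ∃ u ∈ unitriangularSymplecticGroup ι R, (u : Matrix (ι ⊕ ι) (ι ⊕ ι) R) =
      fromBlocks (transvection a b 1) 0 0 (transvection b a (-1)) := by
  have htranspose : (transvection a b (1 : R))ᵀ = transvection b a 1 := by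
    simp [transvection]
  have hdual : OrderDual.toDual b < OrderDual.toDual a := hab
  refine ⟨⟨_, SymplecticGroup.fromBlocks_mem_iff.2 ⟨by simp, by simp, ?_⟩⟩,
    isUnitriangular_fromBlocks_iff.2 ⟨rfl, isUnitriangular_transvection hab 1,
      isUnitriangular_transvection hdual (-1)⟩, rfl⟩
  simp [htranspose, transvection_mul_transvection_same _ _ hab.ne']

lemma exists_mem_unitriangularSymplecticGroup_eq_of_isSymm {S : Matrix ι ι R} (hS : S.IsSymm) :
    ∃ u ∈ unitriangularSymplecticGroup ι R,
      (u : Matrix (ι ⊕ ι) (ι ⊕ ι) R) = fromBlocks 1 S 0 1 :=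
  ⟨⟨_, SymplecticGroup.fromBlocks_mem_iff.2 ⟨by simp, by simpa using hS.eq, by simp⟩⟩,
    isUnitriangular_fromBlocks_iff.2 ⟨rfl, isUnitriangular_one, isUnitriangular_one⟩, rfl⟩

lemma exists_mem_unitriangularSymplecticGroup_row_eq {i j : ι ⊕ ι}
    (hij : flagOrder ι i < flagOrder ι j) :
    ∃ u ∈ unitriangularSymplecticGroup ι R, ∃ c : R, IsUnit c ∧
      (u : Matrix (ι ⊕ ι) (ι ⊕ ι) R) i = Pi.single i 1 + Pi.single j c := by
  rcases i with a | a <;> rcases j with b | b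
  · have hab : a < b := Sum.Lex.inl_lt_inl_iff.1 hij
    obtain ⟨u, hu, hval⟩ := exists_mem_unitriangularSymplecticGroup_eq_transvection (R := R) hab
    refine ⟨u, hu, 1, isUnit_one, ?_⟩
    ext (k | k) <;> simp [hval, transvection, Matrix.one_apply, Matrix.single_apply,
      Pi.single_apply, eq_comm]
  · let S : Matrix ι ι R := .of fun k l => if s(k, l) = s(a, b) then 1 else 0
    have hS : S.IsSymm := Matrix.ext fun k l => by
      simp only [S, transpose_apply, of_apply, Sym2.eq_swap]
    obtain ⟨u, hu, hval⟩ := exists_mem_unitriangularSymplecticGroup_eq_of_isSymm hS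
    refine ⟨u, hu, 1, isUnit_one, ?_⟩
    have hSa (k : ι) : S a k = if k = b then 1 else 0 := by
      simp only [S, of_apply, Sym2.congr_right]
    ext (k | k) <;> simp [hval, hSa, Matrix.one_apply, Pi.single_apply, eq_comm]
  · exact absurd hij Sum.Lex.not_inr_lt_inl
  · have hba : b < a := OrderDual.toDual_lt_toDual.1 (Sum.Lex.inr_lt_inr_iff.1 hij)
    obtain ⟨u, hu, hval⟩ := exists_mem_unitriangularSymplecticGroup_eq_transvection (R := R) hba
    refine ⟨u, hu, -1, isUnit_one.neg, ?_⟩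
    ext (k | k) <;> simp [hval, transvection, Matrix.one_apply, Matrix.single_apply,
      Pi.single_apply, eq_comm]

theorem blockTriangular_of_mem_normalizer {g : symplecticGroup ι R}
    (hg : g ∈ Subgroup.normalizer (unitriangularSymplecticGroup ι R)) :
    (g : Matrix (ι ⊕ ι) (ι ⊕ ι) R).BlockTriangular (flagOrder ι) := by
  intro i j hji
  induction j using (InvImage.wf (flagOrder ι) wellFounded_lt).induction generalizing i with
  | _ j ih =>
    obtain ⟨u, hu, c, hc, hrow⟩ := exists_mem_unitriangularSymplecticGroup_row_eq (R := R) hji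
    have hconj : IsUnitriangular (flagOrder ι) (g⁻¹ * u * g : symplecticGroup ι R).1 :=
      (Subgroup.mem_normalizer_iff''.1 hg u).1 hu
    have hcomm : u.1 * g.1 = g.1 * (g⁻¹ * u * g : symplecticGroup ι R).1 := by
      rw [← Submonoid.coe_mul, ← Submonoid.coe_mul, mul_assoc, mul_inv_cancel_left]
    have hleft : (u.1 * g.1) j j = g.1 j j + c * g.1 i j := by
      simp [Matrix.mul_apply', hrow, add_dotProduct]
    have hright : (g.1 * (g⁻¹ * u * g : symplecticGroup ι R).1) j j = g.1 j j := by
      rw [Matrix.mul_apply, Finset.sum_eq_single j, hconj.apply_diag, mul_one]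
      · intro l _ hlj
        rcases (flagOrder_injective.ne hlj).lt_or_gt with hlt | hlt
        · rw [ih l hlt hlt, zero_mul]
        · rw [hconj.blockTriangular hlt, mul_zero]
      · simp
    rw [hcomm, hright, left_eq_add] at hleft
    exact hc.mul_right_eq_zero.1 hleft

theorem isPGroup_unitriangularSymplecticGroup (p : ℕ) [Fact p.Prime] [CharP R p] :
    IsPGroup p (unitriangularSymplecticGroup ι R) := by
  rintro ⟨g, hg⟩
  obtain ⟨k, hk⟩ := IsUnitriangular.exists_pow_eq_one (p := p) flagOrder_injective hg
  exact ⟨k, Subtype.ext (Subtype.ext (by simpa using hk))⟩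

theorem exists_sylow_eq_unitriangularSymplecticGroup [Finite R] [IsReduced R] (p : ℕ)
    [Fact p.Prime] [CharP R p] :
    ∃ P : Sylow p (symplecticGroup ι R),
      (P : Subgroup (symplecticGroup ι R)) = unitriangularSymplecticGroup ι R :=
  exists_sylow_eq_of_normalizer (isPGroup_unitriangularSymplecticGroup p) fun _ hg _ hpow =>
    isUnitriangular_of_pow_eq_one flagOrder_injective (blockTriangular_of_mem_normalizer hg)
      (congrArg Subtype.val hpow)

end Symplectic

section RankTwo

variable {R F : Type*} [CommRing R] [Field F]

lemma isUnitriangular_id_fin_two_iff {A : Matrix (Fin 2) (Fin 2) R} :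
    IsUnitriangular id A ↔ ∃ a, A = !![1, a; 0, 1] := by
  constructor
  · rintro ⟨htri, hdiag⟩
    have hzero : A 1 0 = 0 := htri Fin.zero_lt_one
    exact ⟨A 0 1, by rw [A.eta_fin_two, hdiag 0, hdiag 1, hzero]; rfl⟩
  · rintro ⟨a, rfl⟩
    refine ⟨fun i j hij => ?_, fun i => ?_⟩
    · fin_cases i <;> fin_cases j <;> first | rfl | exact absurd hij (by decide)
    · fin_cases i <;> rfl

lemma isUnitriangular_toDual_fin_two_iff {D : Matrix (Fin 2) (Fin 2) R} :
    IsUnitriangular OrderDual.toDual D ↔ ∃ d, D = !![1, 0; d, 1] := by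
  constructor
  · rintro ⟨htri, hdiag⟩
    have hzero : D 0 1 = 0 := htri (OrderDual.toDual_lt_toDual.2 Fin.zero_lt_one)
    exact ⟨D 1 0, by rw [D.eta_fin_two, hdiag 0, hdiag 1, hzero]; rfl⟩
  · rintro ⟨d, rfl⟩
    refine ⟨fun i j hij => ?_, fun i => ?_⟩
    · fin_cases i <;> fin_cases j <;> first | rfl | exact absurd hij (by decide)
    · fin_cases i <;> rfl

/-- The general unitriangular matrix in `Sp₄`, for the ordered basis `e₁, e₂, f₁, f₂`. -/
def unitriangularSp4 (a x y z : R) : Matrix (Fin 2 ⊕ Fin 2) (Fin 2 ⊕ Fin 2) R :=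
  fromBlocks !![1, a; 0, 1] !![x, y; y - a * z, z] 0 !![1, 0; -a, 1]

lemma mem_symplecticGroup_and_isUnitriangular_iff {M : Matrix (Fin 2 ⊕ Fin 2) (Fin 2 ⊕ Fin 2) R} :
    M ∈ symplecticGroup (Fin 2) R ∧ IsUnitriangular (flagOrder (Fin 2)) M ↔
      ∃ a x y z, M = unitriangularSp4 a x y z := by
  constructor
  · rintro ⟨hsymp, htri⟩
    rw [← M.fromBlocks_toBlocks] at hsymp htri ⊢
    obtain ⟨hC, hA, hD⟩ := isUnitriangular_fromBlocks_iff.1 htri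
    obtain ⟨a, hA⟩ := isUnitriangular_id_fin_two_iff.1 hA
    obtain ⟨d, hD⟩ := isUnitriangular_toDual_fin_two_iff.1 hD
    generalize M.toBlocks₁₂ = B at *
    rw [hA, hC, hD] at hsymp ⊢
    obtain ⟨-, hBD, hAD⟩ := SymplecticGroup.fromBlocks_mem_iff.1 hsymp
    have hd : d = -a := by
      simpa [Matrix.mul_apply, eq_neg_iff_add_eq_zero, add_comm] using congr($hAD 1 0)
    have hB : B 1 0 = B 0 1 - a * B 1 1 := by
      simpa [Matrix.mul_apply, hd, sub_eq_add_neg] using congr($hBD 0 1)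
    refine ⟨a, B 0 0, B 0 1, B 1 1, ?_⟩
    rw [unitriangularSp4, ← hB, ← hd, ← B.eta_fin_two]
  · rintro ⟨a, x, y, z, rfl⟩
    refine ⟨SymplecticGroup.fromBlocks_mem_iff.2 ⟨by simp, ?_, ?_⟩,
      isUnitriangular_fromBlocks_iff.2 ⟨rfl, isUnitriangular_id_fin_two_iff.2 ⟨a, rfl⟩,
        isUnitriangular_toDual_fin_two_iff.2 ⟨-a, rfl⟩⟩⟩
    all_goals ext i j; fin_cases i <;> fin_cases j <;> simp [Matrix.mul_apply] <;> ring

lemma unitriangularSp4_inj {a x y z a' x' y' z' : R} :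
    unitriangularSp4 a x y z = unitriangularSp4 a' x' y' z' ↔
      a = a' ∧ x = x' ∧ y = y' ∧ z = z' := by
  refine ⟨fun h => ?_, by rintro ⟨rfl, rfl, rfl, rfl⟩; rfl⟩
  have hentry (i j) := congr($h i j)
  exact ⟨hentry (.inl 0) (.inl 1), hentry (.inl 0) (.inr 0), hentry (.inl 0) (.inr 1),
    hentry (.inl 1) (.inr 1)⟩

lemma unitriangularSp4_mul (a x y z a' x' y' z' : R) :
    unitriangularSp4 a x y z * unitriangularSp4 a' x' y' z' =
      unitriangularSp4 (a + a') (x + x' + a * (y' - a' * z') - a' * y)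
        (y + y' + a * z') (z + z') := by
  rw [unitriangularSp4, unitriangularSp4, unitriangularSp4, fromBlocks_multiply, fromBlocks_inj]
  refine ⟨?_, ?_, ?_, ?_⟩ <;> ext i j <;> fin_cases i <;> fin_cases j <;> simp <;> ring

lemma commute_unitriangularSp4_iff {a x y z a' x' y' z' : R} :
    Commute (unitriangularSp4 a x y z) (unitriangularSp4 a' x' y' z') ↔
      a * (2 * y' - a' * z') = a' * (2 * y - a * z) ∧ a * z' = a' * z := by
  rw [commute_iff_eq, unitriangularSp4_mul, unitriangularSp4_mul, unitriangularSp4_inj]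
  constructor
  · rintro ⟨-, hx, hy, -⟩
    exact ⟨by linear_combination hx, by linear_combination hy⟩
  · rintro ⟨hw, hz⟩
    exact ⟨add_comm _ _, by linear_combination hw, by linear_combination hz, add_comm _ _⟩

/-- The coordinates `(x, a, w, z)`, with `w` the sum `2 y - a z` of the two off-diagonal entries of
the upper right block, on the unitriangular subgroup of `Sp₄`. -/
def unitriangularSp4Equiv (h2 : (2 : F) ≠ 0) :
    unitriangularSymplecticGroup (Fin 2) F ≃ F × F × F × F where
  toFun g := (g.1.1 (.inl 0) (.inr 0), g.1.1 (.inl 0) (.inl 1),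
    g.1.1 (.inl 0) (.inr 1) + g.1.1 (.inl 1) (.inr 0), g.1.1 (.inl 1) (.inr 1))
  invFun c :=
    have hc := mem_symplecticGroup_and_isUnitriangular_iff.2
      ⟨c.2.1, c.1, (c.2.2.1 + c.2.1 * c.2.2.2) / 2, c.2.2.2, rfl⟩
    ⟨⟨_, hc.1⟩, hc.2⟩
  left_inv := by
    rintro ⟨⟨g, hg⟩, hu⟩
    obtain ⟨a, x, y, z, rfl⟩ := mem_symplecticGroup_and_isUnitriangular_iff.1 ⟨hg, hu⟩
    have hy : (y + (y - a * z) + a * z) / 2 = y := by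
      rw [add_assoc, sub_add_cancel, ← two_mul, mul_div_cancel_left₀ y h2]
    exact Subtype.ext (Subtype.ext (congrArg (unitriangularSp4 a x · z) hy))
  right_inv := by
    rintro ⟨x, a, w, z⟩
    have hw : (w + a * z) / 2 + ((w + a * z) / 2 - a * z) = w := by
      field_simp
      ring
    exact congrArg (x, a, ·, z) hw

lemma commute_iff_unitriangularSp4Equiv (h2 : (2 : F) ≠ 0)
    (g h : unitriangularSymplecticGroup (Fin 2) F) :
    Commute g h ↔ (unitriangularSp4Equiv h2 g).2.1 • (unitriangularSp4Equiv h2 h).2.2 =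
      (unitriangularSp4Equiv h2 h).2.1 • (unitriangularSp4Equiv h2 g).2.2 := by
  obtain ⟨⟨g, hg⟩, hgU⟩ := g
  obtain ⟨⟨h, hh⟩, hhU⟩ := h
  obtain ⟨a, x, y, z, rfl⟩ := mem_symplecticGroup_and_isUnitriangular_iff.1 ⟨hg, hgU⟩
  obtain ⟨a', x', y', z', rfl⟩ := mem_symplecticGroup_and_isUnitriangular_iff.1 ⟨hh, hhU⟩
  calc
    _ ↔ Commute (unitriangularSp4 a x y z) (unitriangularSp4 a' x' y' z') := by
      simp [commute_iff_eq, Subtype.ext_iff]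
    _ ↔ _ := by
      rw [commute_unitriangularSp4_iff]
      simp [unitriangularSp4Equiv, unitriangularSp4, two_mul, add_sub_assoc]

theorem card_conjClasses_unitriangularSymplecticGroup_fin_two [Finite F] (h2 : (2 : F) ≠ 0) :
    Nat.card (ConjClasses (unitriangularSymplecticGroup (Fin 2) F)) = 2 * Nat.card F ^ 2 - 1 := by
  have hcard := card_conjClasses_mul_card_of_commute_iff (unitriangularSp4Equiv h2)
    (commute_iff_unitriangularSp4Equiv h2)
  rw [mul_comm, Nat.card_prod] at hcard
  have hcancel := Nat.eq_of_mul_eq_mul_left Nat.card_pos hcard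
  have : 0 < Nat.card F ^ 2 := pow_pos Nat.card_pos 2
  rw [hcancel, ← sq]
  omega

end RankTwo

/-- The number of conjugacy classes of a Sylow `p`-subgroup of `Sp_4(F_q)`,
for `p` an odd prime and `q` a power of `p`, written in `v = q - 1`. -/
theorem card_conjClasses_sylow_sp4 (p q : ℕ) (hp : p.Prime) (hodd : Odd p)
    (hq : ∃ n : ℕ, 0 < n ∧ q = p ^ n)
    (F : Type*) [Field F] [Fintype F] (hF : Fintype.card F = q)
    (P : Sylow p (Matrix.symplecticGroup (Fin 2) F)) (v : ℕ) (hv : v = q - 1) :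
    Nat.card (ConjClasses (P : Subgroup (Matrix.symplecticGroup (Fin 2) F))) =
      2 * v ^ 2 + 4 * v + 1 := by
  have : Fact p.Prime := ⟨hp⟩
  obtain ⟨n, -, rfl⟩ := hq
  have : CharP F p := charP_of_card_eq_prime_pow hF
  have h2 : (2 : F) ≠ 0 := Ring.two_ne_zero <| by
    rw [ringChar.eq F p]
    exact hodd.ne_two_of_dvd_nat dvd_rfl
  obtain ⟨Q, hQ⟩ := exists_sylow_eq_unitriangularSymplecticGroup (ι := Fin 2) (R := F) p
  have e : P ≃* unitriangularSymplecticGroup (Fin 2) F :=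
    (P.equiv Q).trans (MulEquiv.subgroupCongr hQ)
  have hcardF : Nat.card F = v + 1 := by
    rw [Nat.card_eq_fintype_card, hF, hv, Nat.sub_add_cancel (pow_pos hp.pos n)]
  rw [card_conjClasses_congr e, card_conjClasses_unitriangularSymplecticGroup_fin_two h2, hcardF]
  exact Nat.sub_eq_of_eq_add (by ring)
end

section
/- Let p be an odd prime, q a power of p, and let P be a Sylow p-subgroup of the symplectic group Sp_8(F_q). Then the number of conjugacy classes of P equals v⁶ + 11v⁵ + 48v⁴ + 88v³ + 64v² + 16v + 1, where v = q − 1. -/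
/-!
Up to conjugacy, the Sylow subgroup is the group `U` of the block matrices
`[[g, S g⁻ᵀ], [0, g⁻ᵀ]]` with `g` upper unitriangular and `S` symmetric: a `p`-group containing `U`
fixes the standard isotropic flag, because `p`-groups have nonzero fixed vectors in characteristic
`p`. Thus `U` is a semidirect product of the symmetric matrices by the unitriangular group, and the
elements with coordinates `(g, S)` and `(h, T)` commute if and only if `g` and `h` commute and
`S + g T gᵀ = T + h S hᵀ`. For fixed `g` and `h` the latter is a linear condition on `(S, T)`, whose
number of solutions is, by duality for the trace form, proportional to the number of symmetric `C`
with `gᵀ C g = C = hᵀ C h`. The Cayley transform `g = (1 + A) (1 - A)⁻¹` preserves commutation and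
turns `gᵀ C g = C` into `Aᵀ C + C A = 0`. As `k(U) |U|` is the number of commuting pairs in `U`,
it follows that `k(U)` times the number of strictly upper triangular matrices is the sum over `C` of
the number of commuting pairs in the isotropy algebra of `C`, the set of the strictly upper
triangular solutions `A`.

For `4 × 4` matrices the isotropy algebras are found according to the position of the first nonzero
entry of `C`. If `c₁₁ ≠ 0`, the isotropy algebra of `C` is that of its `3 × 3` Schur complement.
Otherwise, unless all entries of `C` but `c₄₄` vanish, either the isotropy algebra is commutative or
two of its elements commute if and only if some of their coordinates `(s, u)` and `(t, w)` satisfy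
`s • w = t • u`.
-/

namespace SpUnipotent

open Matrix

section Duality

variable {F V : Type*} [Field F] [AddCommGroup V] [Module F V]
  {B : LinearMap.BilinForm F V}

theorem orthogonal_range_coprod (hB : B.Nondegenerate) {f f' g g' : Module.End F V}
    (hf : LinearMap.IsAdjointPair B B f f') (hg : LinearMap.IsAdjointPair B B g g') :
    B.orthogonal (f.coprod g).range = f'.ker ⊓ g'.ker := by
  ext c
  simp only [LinearMap.BilinForm.mem_orthogonal_iff, LinearMap.mem_range, Prod.exists,
    LinearMap.coprod_apply, Submodule.mem_inf, LinearMap.mem_ker]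
  constructor
  · intro hc
    refine ⟨hB.2 _ fun x ↦ ?_, hB.2 _ fun x ↦ ?_⟩
    · simpa [← hf x c] using hc (f x) ⟨x, 0, by simp⟩
    · simpa [← hg x c] using hc (g x) ⟨0, x, by simp⟩
  · rintro ⟨hfc, hgc⟩ _ ⟨x, y, rfl⟩
    simp [hf x c, hg y c, hfc, hgc]

theorem card_ker_coprod [Finite V] (hB : B.Nondegenerate) {f f' g g' : Module.End F V}
    (hf : LinearMap.IsAdjointPair B B f f') (hg : LinearMap.IsAdjointPair B B g g') :
    Nat.card (f.coprod g).ker = Nat.card V * Nat.card ↥(f'.ker ⊓ g'.ker) := by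
  have hrank := LinearMap.finrank_range_add_finrank_ker (f.coprod g)
  have horth := LinearMap.BilinForm.finrank_orthogonal hB (f.coprod g).range
  have hle := Submodule.finrank_le (f.coprod g).range
  rw [Module.finrank_prod] at hrank
  rw [orthogonal_range_coprod hB hf hg] at horth
  rw [Module.natCard_eq_pow_finrank (K := F) (V := V), Module.natCard_eq_pow_finrank (K := F),
    Module.natCard_eq_pow_finrank (K := F) (V := ↥(f'.ker ⊓ g'.ker)), ← pow_add]
  congr 1
  omega

theorem card_add_apply_eq_add_apply [Finite V] (hB : B.Nondegenerate) {f f' g g' : Module.End F V}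
    (hf : LinearMap.IsAdjointPair B B f f') (hg : LinearMap.IsAdjointPair B B g g') :
    Nat.card {x : V × V // x.1 + f x.2 = x.2 + g x.1} =
      Nat.card V * Nat.card {c // f' c = c ∧ g' c = c} := by
  have hid : LinearMap.IsAdjointPair B B (1 : Module.End F V) (1 : Module.End F V) :=
    fun _ _ ↦ rfl
  have hker (x : V × V) : x.1 + f x.2 = x.2 + g x.1 ↔ x ∈ ((1 - g).coprod (f - 1)).ker := by
    simp only [LinearMap.mem_ker, LinearMap.coprod_apply, LinearMap.sub_apply, Module.End.one_apply]
    grind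
  have hfix (c : V) : f' c = c ∧ g' c = c ↔ c ∈ (1 - g').ker ⊓ (f' - 1).ker := by
    simp only [Submodule.mem_inf, LinearMap.mem_ker, LinearMap.sub_apply, Module.End.one_apply,
      sub_eq_zero]
    grind
  rw [Nat.card_congr (Equiv.subtypeEquivRight hker), Nat.card_congr (Equiv.subtypeEquivRight hfix)]
  exact card_ker_coprod hB (hid.sub hg) (f := 1 - g) (g := f - 1) (hf.sub hid)

/-- The pairs `(g, x)` are thought of as elements of a semidirect product acting through `ρ`; the
equation says that two of them commute. -/
theorem card_commuting_eq_mul_card_fixed [Finite V] (hB : B.Nondegenerate) {G : Type*} [Finite G]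
    (R : G → G → Prop) {ρ ρ' : G → Module.End F V}
    (hρ : ∀ g, LinearMap.IsAdjointPair B B (ρ g) (ρ' g)) :
    Nat.card {x : (G × V) × (G × V) //
        R x.1.1 x.2.1 ∧ x.1.2 + ρ x.1.1 x.2.2 = x.2.2 + ρ x.2.1 x.1.2} =
      Nat.card V * Nat.card {x : V × (G × G) //
        R x.2.1 x.2.2 ∧ ρ' x.2.1 x.1 = x.1 ∧ ρ' x.2.2 x.1 = x.1} := by
  let e₁ : {x : (G × V) × (G × V) //
        R x.1.1 x.2.1 ∧ x.1.2 + ρ x.1.1 x.2.2 = x.2.2 + ρ x.2.1 x.1.2} ≃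
      Σ a : {a : G × G // R a.1 a.2}, {x : V × V // x.1 + ρ a.1.1 x.2 = x.2 + ρ a.1.2 x.1} :=
    ⟨fun x ↦ ⟨⟨(x.1.1.1, x.1.2.1), x.2.1⟩, (x.1.1.2, x.1.2.2), x.2.2⟩,
      fun a ↦ ⟨((a.1.1.1, a.2.1.1), (a.1.1.2, a.2.1.2)), a.1.2, a.2.2⟩, fun _ ↦ rfl, fun _ ↦ rfl⟩
  let e₂ : {x : V × (G × G) // R x.2.1 x.2.2 ∧ ρ' x.2.1 x.1 = x.1 ∧ ρ' x.2.2 x.1 = x.1} ≃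
      Σ a : {a : G × G // R a.1 a.2}, {c // ρ' a.1.1 c = c ∧ ρ' a.1.2 c = c} :=
    ⟨fun x ↦ ⟨⟨x.1.2, x.2.1⟩, x.1.1, x.2.2⟩, fun a ↦ ⟨(a.2.1, a.1.1), a.1.2, a.2.2⟩,
      fun _ ↦ rfl, fun _ ↦ rfl⟩
  cases nonempty_fintype {a : G × G // R a.1 a.2}
  rw [Nat.card_congr e₁, Nat.card_congr e₂, Nat.card_sigma, Nat.card_sigma, Finset.mul_sum]
  exact Finset.sum_congr rfl fun a _ ↦ card_add_apply_eq_add_apply hB (hρ _) (hρ _)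

end Duality

section Symmetric

variable {ι R : Type*} [CommRing R]

variable (ι R) in
/-- The module of symmetric matrices. -/
def symmetric : Submodule R (Matrix ι ι R) where
  carrier := {S | S.IsSymm}
  add_mem' := IsSymm.add
  zero_mem' := isSymm_zero
  smul_mem' c _ hS := hS.smul c

theorem mem_symmetric {S : Matrix ι ι R} : S ∈ symmetric ι R ↔ S.IsSymm := Iff.rfl

variable [Fintype ι]

theorem isSymm_mul_mul_transpose (g : Matrix ι ι R) {S : Matrix ι ι R} (hS : S.IsSymm) :
    (g * S * gᵀ).IsSymm := by
  simp only [IsSymm, transpose_mul, transpose_transpose, hS.eq, Matrix.mul_assoc]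

/-- The endomorphism `S ↦ g * S * gᵀ` of the module of symmetric matrices. -/
def congruence (g : Matrix ι ι R) : Module.End R (symmetric ι R) :=
  (LinearMap.mulLeft R g ∘ₗ LinearMap.mulRight R gᵀ).restrict fun S hS ↦
    show (g * (S * gᵀ)).IsSymm by
      rw [← Matrix.mul_assoc]; exact isSymm_mul_mul_transpose g hS

@[simp]
theorem coe_congruence (g : Matrix ι ι R) (S : symmetric ι R) :
    (congruence g S : Matrix ι ι R) = g * S * gᵀ :=
  (Matrix.mul_assoc _ _ _).symm

variable (ι R) in
/-- The trace form `(S, T) ↦ tr (S * T)` on symmetric matrices. -/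
def symmetricTraceForm : LinearMap.BilinForm R (symmetric ι R) :=
  LinearMap.mk₂ R (fun S T ↦ trace (S * T : Matrix ι ι R)) (by simp [add_mul]) (by simp)
    (by simp [mul_add]) (by simp)

theorem symmetricTraceForm_apply (S T : symmetric ι R) :
    symmetricTraceForm ι R S T = trace (S * T : Matrix ι ι R) := rfl

theorem symmetricTraceForm_nondegenerate (h2 : IsUnit (2 : R)) :
    (symmetricTraceForm ι R).Nondegenerate := by
  have hrefl : (symmetricTraceForm ι R).IsRefl := fun S T h ↦ by
    rwa [symmetricTraceForm_apply, trace_mul_comm]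
  refine hrefl.nondegenerate_iff_separatingLeft.2 fun S hS ↦ ?_
  have htrace (X : Matrix ι ι R) : trace (S * X : Matrix ι ι R) = 0 := by
    have hX := hS ⟨X + Xᵀ, isSymm_add_transpose_self X⟩
    have htr : trace (S * Xᵀ : Matrix ι ι R) = trace (S * X : Matrix ι ι R) := by
      rw [← trace_transpose, transpose_mul, transpose_transpose, S.2.eq, trace_mul_comm]
    rw [symmetricTraceForm_apply, Matrix.mul_add, trace_add, htr, ← two_mul] at hX
    exact h2.mul_right_eq_zero.1 hX
  exact Subtype.ext (ext_iff_trace_mul_right.2 fun X ↦ by simp [htrace])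

theorem isAdjointPair_congruence_transpose (g : Matrix ι ι R) :
    LinearMap.IsAdjointPair (symmetricTraceForm ι R) (symmetricTraceForm ι R)
      (congruence g) (congruence gᵀ) := fun S T ↦ by
  simp only [symmetricTraceForm_apply, coe_congruence, transpose_transpose]
  rw [Matrix.mul_assoc g, Matrix.mul_assoc g, trace_mul_comm]
  simp only [Matrix.mul_assoc]

theorem mem_skewAdjointMatricesSubmodule_iff [DecidableEq ι] {C A : Matrix ι ι R}
    (hC : C.IsSymm) :
    A ∈ skewAdjointMatricesSubmodule C ↔ ∀ i j, (C * A) i j + (C * A) j i = 0 := by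
  rw [mem_skewAdjointMatricesSubmodule, Matrix.IsSkewAdjoint, Matrix.IsAdjointPair, mul_neg,
    ← add_eq_zero_iff_eq_neg, ← Matrix.ext_iff, ← hC.eq, ← transpose_mul]
  simp only [Matrix.add_apply, transpose_apply, hC.eq, Matrix.zero_apply, add_comm]

end Symmetric

section StrictUpper

variable {ι R : Type*} [LinearOrder ι] [CommRing R]

variable (ι R) in
/-- The module of strictly upper triangular matrices, the Lie algebra of the unitriangular group. -/
def strictUpper : Submodule R (Matrix ι ι R) where
  carrier := {A | ∀ ⦃i j⦄, j ≤ i → A i j = 0}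
  add_mem' hA hB i j hij := by simp [hA hij, hB hij]
  zero_mem' _ _ _ := rfl
  smul_mem' c A hA i j hij := by simp [hA hij]

theorem mem_strictUpper {A : Matrix ι ι R} :
    A ∈ strictUpper ι R ↔ ∀ ⦃i j⦄, j ≤ i → A i j = 0 := Iff.rfl

variable {A B : Matrix ι ι R}

theorem isUpperTriangular_smul_one_add (hA : A ∈ strictUpper ι R) (c : R) :
    (c • 1 + A).IsUpperTriangular := fun i j (hij : j < i) ↦ by
  simp [hij.ne', hA hij.le]

variable [Fintype ι]

theorem det_smul_one_add (hA : A ∈ strictUpper ι R) (c : R) :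
    (c • 1 + A).det = c ^ Fintype.card ι := by
  simp [det_of_isUpperTriangular (isUpperTriangular_smul_one_add hA c), hA le_rfl]

theorem mul_mem_strictUpper (hA : A ∈ strictUpper ι R) (hB : B.IsUpperTriangular) :
    A * B ∈ strictUpper ι R := fun i j hij ↦ by
  refine Finset.sum_eq_zero fun k _ ↦ ?_
  rcases le_or_gt k i with hk | hk
  · simp [hA hk]
  · simp [hB (show j < k from hij.trans_lt hk)]

theorem isUnit_det_smul_one_add (hA : A ∈ strictUpper ι R) {c : R} (hc : IsUnit c) :
    IsUnit (c • 1 + A).det := by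
  rw [det_smul_one_add hA]; exact hc.pow _

theorem mul_inv_smul_one_add_mem_strictUpper (hA : A ∈ strictUpper ι R)
    (hB : B ∈ strictUpper ι R) {c : R} (hc : IsUnit c) :
    A * (c • 1 + B)⁻¹ ∈ strictUpper ι R := by
  have := invertibleOfIsUnitDet _ (isUnit_det_smul_one_add hB hc)
  exact mul_mem_strictUpper hA
    (blockTriangular_inv_of_blockTriangular (isUpperTriangular_smul_one_add hB c))

variable (ι R) in
/-- The group of upper triangular matrices with ones on the diagonal. -/
def unitriangular : Subgroup (GL ι R) where
  carrier := {g | (g - 1 : Matrix ι ι R) ∈ strictUpper ι R}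
  one_mem' := by simp
  mul_mem' {g h} hg hh := by
    have hupper := isUpperTriangular_smul_one_add hh 1
    rw [one_smul, add_sub_cancel] at hupper
    have h := add_mem (mul_mem_strictUpper hg hupper) hh
    rw [sub_mul, one_mul, sub_add_sub_cancel] at h
    simpa using h
  inv_mem' {g} hg := by
    have h := mul_inv_smul_one_add_mem_strictUpper (neg_mem hg) hg isUnit_one
    simpa [sub_mul, ← coe_units_inv] using h

end StrictUpper

section Cayley

variable {ι R : Type*} [Fintype ι] [DecidableEq ι] [CommRing R] {A B C : Matrix ι ι R}

/-- The Cayley transform, which carries a Lie algebra of skew-adjoint matrices to the isometry group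
of the form; it is a junk value unless `1 - A` is invertible. -/
noncomputable def cayley (A : Matrix ι ι R) : Matrix ι ι R :=
  (1 + A) * (1 - A)⁻¹

theorem cayley_eq (hA : IsUnit (1 - A).det) : cayley A = (2 : R) • (1 - A)⁻¹ - 1 := by
  rw [cayley, show 1 + A = (2 : R) • 1 - (1 - A) by rw [two_smul]; abel, sub_mul,
    mul_nonsing_inv _ hA]
  simp

theorem cayley_sub_one (hA : IsUnit (1 - A).det) : cayley A - 1 = (2 : R) • (A * (1 - A)⁻¹) := by
  calc cayley A - 1 = (1 + A) * (1 - A)⁻¹ - (1 - A) * (1 - A)⁻¹ := by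
        rw [mul_nonsing_inv _ hA, cayley]
    _ = (2 : R) • (A * (1 - A)⁻¹) := by rw [two_smul]; noncomm_ring

theorem cayley_transpose_mul_mul_eq_iff (h2 : IsUnit (2 : R)) (hA : IsUnit (1 - A).det) :
    (cayley A)ᵀ * C * cayley A = C ↔ A ∈ skewAdjointMatricesSubmodule C := by
  have hunit : IsUnit (1 - A) := (isUnit_iff_isUnit_det _).2 hA
  have hcancel : cayley A * (1 - A) = 1 + A := by
    rw [cayley, nonsing_inv_mul_cancel_right _ _ hA]
  have hpolar : (1 - A)ᵀ * ((cayley A)ᵀ * C * cayley A - C) * (1 - A) =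
      (2 : R) • (Aᵀ * C + C * A) :=
    calc (1 - A)ᵀ * ((cayley A)ᵀ * C * cayley A - C) * (1 - A)
        = (cayley A * (1 - A))ᵀ * C * (cayley A * (1 - A)) - (1 - A)ᵀ * C * (1 - A) := by
          rw [transpose_mul]; noncomm_ring
      _ = (2 : R) • (Aᵀ * C + C * A) := by
          rw [hcancel, two_smul]
          simp only [transpose_add, transpose_sub, transpose_one]
          noncomm_ring
  rw [mem_skewAdjointMatricesSubmodule, Matrix.IsSkewAdjoint, Matrix.IsAdjointPair, Matrix.mul_neg,
    ← add_eq_zero_iff_eq_neg, ← sub_eq_zero, ← h2.smul_eq_zero (x := _ + _), ← hpolar,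
    hunit.mul_left_eq_zero, ((isUnit_transpose _).2 hunit).mul_right_eq_zero]

theorem commute_inv_iff (hA : IsUnit A.det) (hB : IsUnit B.det) :
    Commute A⁻¹ B⁻¹ ↔ Commute A B := by
  have hinv {M N : Matrix ι ι R} (h : Commute M N) : Commute M⁻¹ N⁻¹ := by
    simpa only [nonsing_inv_eq_ringInverse] using h.ringInverse_ringInverse
  refine ⟨fun h ↦ ?_, hinv⟩
  simpa only [nonsing_inv_nonsing_inv _ hA, nonsing_inv_nonsing_inv _ hB] using hinv h

theorem commute_cayley_iff (h2 : IsUnit (2 : R)) (hA : IsUnit (1 - A).det)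
    (hB : IsUnit (1 - B).det) : Commute (cayley A) (cayley B) ↔ Commute A B := by
  have hsub (M N : Matrix ι ι R) : Commute (M - 1) (N - 1) ↔ Commute M N := by
    rw [commute_iff_eq, commute_iff_eq, ← sub_eq_zero, ← sub_eq_zero (a := M * N)]
    congr! 1
    noncomm_ring
  have hsub' (M N : Matrix ι ι R) : Commute (1 - M) (1 - N) ↔ Commute M N := by
    rw [← neg_sub, ← neg_sub N, Commute.neg_left_iff, Commute.neg_right_iff, hsub]
  obtain ⟨u, hu⟩ := h2
  rw [cayley_eq hA, cayley_eq hB, hsub, ← hu]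
  simp_rw [← Units.smul_def]
  rw [Commute.smul_left_iff, Commute.smul_right_iff,
    commute_inv_iff hA hB, hsub']

end Cayley

section CayleyEquiv

variable {ι R : Type*} [Fintype ι] [LinearOrder ι] [CommRing R] {A : Matrix ι ι R}

theorem isUnit_det_one_sub (hA : A ∈ strictUpper ι R) : IsUnit (1 - A).det := by
  simpa [sub_eq_add_neg] using isUnit_det_smul_one_add (neg_mem hA) isUnit_one

theorem cayley_sub_one_mem_strictUpper (hA : A ∈ strictUpper ι R) :
    cayley A - 1 ∈ strictUpper ι R := by
  rw [cayley_sub_one (isUnit_det_one_sub hA)]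
  have h := mul_inv_smul_one_add_mem_strictUpper hA (neg_mem hA) isUnit_one
  rw [one_smul, ← sub_eq_add_neg] at h
  exact Submodule.smul_mem _ _ h

theorem exists_cayley_eq (h2 : IsUnit (2 : R)) {g : Matrix ι ι R} (hg : g - 1 ∈ strictUpper ι R) :
    ∃ A ∈ strictUpper ι R, cayley A = g := by
  obtain ⟨u, hu⟩ := h2
  have hdet := isUnit_det_smul_one_add hg (hu ▸ u.isUnit)
  have hmem := mul_inv_smul_one_add_mem_strictUpper hg hg (hu ▸ u.isUnit)
  have hg1 : (2 : R) • 1 + (g - 1) = g + 1 := by rw [two_smul]; abel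
  rw [hg1] at hdet hmem
  have hinv : (1 - (g - 1) * (g + 1)⁻¹)⁻¹ = (↑u⁻¹ : R) • (g + 1) := by
    refine inv_eq_left_inv ?_
    calc (↑u⁻¹ : R) • (g + 1) * (1 - (g - 1) * (g + 1)⁻¹)
        = (↑u⁻¹ : R) • ((g + 1) - (g + 1) * (g - 1) * (g + 1)⁻¹) := by
          rw [smul_mul_assoc]; noncomm_ring
      _ = (↑u⁻¹ : R) • ((g + 1) - (g - 1)) := by
          rw [show (g + 1) * (g - 1) = (g - 1) * (g + 1) by noncomm_ring,
            mul_nonsing_inv_cancel_right _ _ hdet]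
      _ = (↑u⁻¹ : R) • (2 : R) • 1 := by rw [two_smul]; congr 1; abel
      _ = 1 := by rw [← hu, smul_smul, Units.inv_mul, one_smul]
  refine ⟨(g - 1) * (g + 1)⁻¹, hmem, ?_⟩
  rw [cayley_eq (isUnit_det_one_sub hmem), hinv, ← hu, smul_smul, Units.mul_inv, one_smul,
    add_sub_cancel_right]

theorem isUnit_det_cayley (hA : A ∈ strictUpper ι R) : IsUnit (cayley A).det := by
  simpa using isUnit_det_smul_one_add (cayley_sub_one_mem_strictUpper hA) isUnit_one

theorem cayley_injOn (h2 : IsUnit (2 : R)) :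
    Set.InjOn cayley (strictUpper ι R : Set (Matrix ι ι R)) := by
  intro A hA B hB h
  rw [cayley_eq (isUnit_det_one_sub hA), cayley_eq (isUnit_det_one_sub hB), sub_left_inj,
    h2.smul_left_cancel] at h
  simpa using inv_inj h (isUnit_det_one_sub hA)

variable (ι) in
/-- The Cayley transform as a bijection from the strictly upper triangular matrices to the
unitriangular group. -/
noncomputable def cayleyEquiv (h2 : IsUnit (2 : R)) : strictUpper ι R ≃ unitriangular ι R :=
  Equiv.ofBijective
    (fun A ↦ ⟨GeneralLinearGroup.mk'' (cayley A) (isUnit_det_cayley A.2),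
      cayley_sub_one_mem_strictUpper A.2⟩) <| by
    constructor
    · intro A B h
      exact Subtype.ext <| cayley_injOn h2 A.2 B.2 <|
        congrArg (fun g : unitriangular ι R ↦ ((g : GL ι R) : Matrix ι ι R)) h
    · rintro ⟨g, hg⟩
      obtain ⟨A, hA, h⟩ := exists_cayley_eq h2 hg
      exact ⟨⟨A, hA⟩, Subtype.ext (Units.ext h)⟩

theorem coe_cayleyEquiv (h2 : IsUnit (2 : R)) (A : strictUpper ι R) :
    ((cayleyEquiv ι h2 A : GL ι R) : Matrix ι ι R) = cayley A := rfl

end CayleyEquiv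

section Siegel

variable {ι R : Type*} [Fintype ι] [DecidableEq ι] [CommRing R]

/-- The element `[[g, S g⁻ᵀ], [0, g⁻ᵀ]]` of the Siegel parabolic, the stabiliser of a Lagrangian
subspace; it is symplectic exactly when `S` is symmetric. -/
def siegel (g : GL ι R) (S : Matrix ι ι R) : Matrix (ι ⊕ ι) (ι ⊕ ι) R :=
  fromBlocks g (S * (↑g⁻¹ : Matrix ι ι R)ᵀ) 0 (↑g⁻¹ : Matrix ι ι R)ᵀ

theorem transpose_mul_inv_transpose (g : GL ι R) :
    (g : Matrix ι ι R)ᵀ * (↑g⁻¹ : Matrix ι ι R)ᵀ = 1 := by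
  rw [← transpose_mul, Units.inv_mul, transpose_one]

theorem inv_transpose_mul_transpose (g : GL ι R) :
    (↑g⁻¹ : Matrix ι ι R)ᵀ * (g : Matrix ι ι R)ᵀ = 1 := by
  rw [← transpose_mul, Units.mul_inv, transpose_one]

theorem siegel_one_zero : siegel (1 : GL ι R) 0 = 1 := by
  simp [siegel]

theorem siegel_mul (g h : GL ι R) (S T : Matrix ι ι R) :
    siegel g S * siegel h T = siegel (g * h) (S + g * T * (g : Matrix ι ι R)ᵀ) := by
  simp only [siegel, fromBlocks_multiply, _root_.mul_inv_rev, Units.val_mul, transpose_mul,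
    Matrix.mul_zero, Matrix.zero_mul, add_zero, zero_add, Matrix.add_mul]
  congr 1
  rw [add_comm]
  simp only [Matrix.mul_assoc, ← Matrix.mul_assoc (g : Matrix ι ι R)ᵀ,
    transpose_mul_inv_transpose, Matrix.one_mul]

theorem siegel_inj {g h : GL ι R} {S T : Matrix ι ι R} :
    siegel g S = siegel h T ↔ g = h ∧ S = T := by
  refine ⟨fun hgh ↦ ?_, by rintro ⟨rfl, rfl⟩; rfl⟩
  obtain ⟨h₁, h₂, -, -⟩ := fromBlocks_inj.1 hgh
  obtain rfl := Units.ext h₁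
  refine ⟨rfl, ?_⟩
  simpa only [Matrix.mul_assoc, inv_transpose_mul_transpose, mul_one] using
    congrArg (· * (g : Matrix ι ι R)ᵀ) h₂

theorem siegel_mem_symplecticGroup (g : GL ι R) {S : Matrix ι ι R} (hS : S.IsSymm) :
    siegel g S ∈ symplecticGroup ι R := by
  rw [siegel, SymplecticGroup.fromBlocks_mem_iff]
  refine ⟨by simp, ?_, ?_⟩
  · simp only [transpose_mul, transpose_transpose, hS.eq, Matrix.mul_assoc]
  · rw [transpose_mul_inv_transpose, transpose_zero, Matrix.zero_mul, sub_zero]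

theorem exists_eq_siegel {A B D : Matrix ι ι R}
    (h : fromBlocks A B 0 D ∈ symplecticGroup ι R) :
    ∃ (g : GL ι R) (S : Matrix ι ι R), S.IsSymm ∧ fromBlocks A B 0 D = siegel g S := by
  obtain ⟨-, hBD, hAD⟩ := SymplecticGroup.fromBlocks_mem_iff.1 h
  rw [transpose_zero, zero_mul, sub_zero] at hAD
  have hDA : Dᵀ * A = 1 := by simpa using congrArg transpose hAD
  have hDA' : D * Aᵀ = 1 := mul_eq_one_comm.1 hAD
  refine ⟨⟨A, Dᵀ, mul_eq_one_comm.1 hDA, hDA⟩, B * Aᵀ, ?_, ?_⟩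
  · have hADt : A * Dᵀ = 1 := mul_eq_one_comm.1 hDA
    calc (B * Aᵀ)ᵀ = A * (Bᵀ * D) * Aᵀ := by
          rw [transpose_mul, transpose_transpose, Matrix.mul_assoc, Matrix.mul_assoc, hDA', mul_one]
      _ = B * Aᵀ := by rw [hBD, ← Matrix.mul_assoc, hADt, one_mul]
  · simp [siegel, Matrix.mul_assoc, hAD]

theorem commute_siegel_iff {g h : GL ι R} {S T : Matrix ι ι R} :
    Commute (siegel g S) (siegel h T) ↔ Commute g h ∧
      S + g * T * (g : Matrix ι ι R)ᵀ = T + h * S * (h : Matrix ι ι R)ᵀ := by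
  rw [commute_iff_eq, siegel_mul, siegel_mul, siegel_inj, commute_iff_eq]

end Siegel

section MaximalUnipotent

variable {ι R : Type*} [Fintype ι] [LinearOrder ι] [CommRing R]

variable (ι R) in
/-- The standard maximal unipotent subgroup of the symplectic group: the unipotent radical of the
stabiliser of the complete flag of the standard Lagrangian subspace. -/
def maximalUnipotent : Subgroup (symplecticGroup ι R) where
  carrier := {M | ∃ g ∈ unitriangular ι R, ∃ S ∈ symmetric ι R, (M : Matrix _ _ R) = siegel g S}
  one_mem' := ⟨1, one_mem _, 0, zero_mem _, siegel_one_zero.symm⟩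
  mul_mem' := by
    rintro M N ⟨g, hg, S, hS, hM⟩ ⟨h, hh, T, hT, hN⟩
    exact ⟨g * h, mul_mem hg hh, _, add_mem hS (isSymm_mul_mul_transpose _ hT), by
      rw [Submonoid.coe_mul, hM, hN, siegel_mul]⟩
  inv_mem' := by
    rintro M ⟨g, hg, S, hS, hM⟩
    have hsymm := (isSymm_mul_mul_transpose (↑g⁻¹ : Matrix ι ι R) hS).neg
    refine ⟨g⁻¹, inv_mem hg, _, hsymm, ?_⟩
    rw [inv_eq_of_mul_eq_one_left (a := ⟨_, siegel_mem_symplecticGroup g⁻¹ hsymm⟩)]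
    refine Subtype.ext ?_
    rw [Submonoid.coe_mul, hM, siegel_mul, inv_mul_cancel, neg_add_cancel, siegel_one_zero,
      Submonoid.coe_one]

theorem siegel_mem_maximalUnipotent {g : GL ι R} (hg : g ∈ unitriangular ι R) {S : Matrix ι ι R}
    (hS : S.IsSymm) :
    ⟨siegel g S, siegel_mem_symplecticGroup g hS⟩ ∈ maximalUnipotent ι R :=
  ⟨g, hg, S, hS, rfl⟩

variable (ι R) in
/-- The coordinates of the maximal unipotent subgroup as a semidirect product. -/
noncomputable def siegelEquiv : unitriangular ι R × symmetric ι R ≃ maximalUnipotent ι R :=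
  Equiv.ofBijective (fun x ↦ ⟨_, siegel_mem_maximalUnipotent x.1.2 x.2.2⟩) <| by
    constructor
    · intro x y hxy
      have hsiegel : siegel (x.1 : GL ι R) (x.2 : Matrix ι ι R) = siegel y.1 y.2 :=
        Subtype.ext_iff.1 (Subtype.ext_iff.1 hxy)
      obtain ⟨h₁, h₂⟩ := siegel_inj.1 hsiegel
      exact Prod.ext (Subtype.ext h₁) (Subtype.ext h₂)
    · rintro ⟨M, g, hg, S, hS, hM⟩
      exact ⟨(⟨g, hg⟩, ⟨S, hS⟩), Subtype.ext (Subtype.ext hM.symm)⟩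

theorem commute_siegelEquiv_iff (x y : unitriangular ι R × symmetric ι R) :
    Commute (siegelEquiv ι R x) (siegelEquiv ι R y) ↔ Commute x.1 y.1 ∧
      x.2 + congruence (x.1 : GL ι R) y.2 = y.2 + congruence (y.1 : GL ι R) x.2 := by
  have hval : Commute (siegelEquiv ι R x) (siegelEquiv ι R y) ↔
      Commute (siegel (x.1 : GL ι R) (x.2 : Matrix ι ι R)) (siegel y.1 y.2) := by
    simp only [commute_iff_eq, Subtype.ext_iff]
    rfl
  rw [hval, commute_siegel_iff]
  simp only [commute_iff_eq, Subtype.ext_iff]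
  simp

end MaximalUnipotent

section CommutingPairs

variable {ι R : Type*} [Fintype ι] [LinearOrder ι] [CommRing R]

theorem card_maximalUnipotent (h2 : IsUnit (2 : R)) :
    Nat.card (maximalUnipotent ι R) = Nat.card (strictUpper ι R) * Nat.card (symmetric ι R) := by
  rw [← Nat.card_congr (siegelEquiv ι R), Nat.card_prod, Nat.card_congr (cayleyEquiv ι h2)]

theorem card_commute_maximalUnipotent :
    Nat.card {p : maximalUnipotent ι R × maximalUnipotent ι R // Commute p.1 p.2} =
      Nat.card {x : (unitriangular ι R × symmetric ι R) × (unitriangular ι R × symmetric ι R) //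
        Commute x.1.1 x.2.1 ∧ x.1.2 + congruence (x.1.1 : GL ι R) x.2.2 =
          x.2.2 + congruence (x.2.1 : GL ι R) x.1.2} :=
  (Nat.card_congr (((siegelEquiv ι R).prodCongr (siegelEquiv ι R)).subtypeEquiv
    fun x ↦ (commute_siegelEquiv_iff x.1 x.2).symm)).symm

theorem card_fixed_eq_card_skewAdjoint (h2 : IsUnit (2 : R)) :
    Nat.card {x : symmetric ι R × (unitriangular ι R × unitriangular ι R) //
        Commute x.2.1 x.2.2 ∧ congruence (x.2.1 : GL ι R).valᵀ x.1 = x.1 ∧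
          congruence (x.2.2 : GL ι R).valᵀ x.1 = x.1} =
      Nat.card {x : symmetric ι R × (strictUpper ι R × strictUpper ι R) //
        Commute x.2.1.1 x.2.2.1 ∧ x.2.1.1 ∈ skewAdjointMatricesSubmodule x.1.1 ∧
          x.2.2.1 ∈ skewAdjointMatricesSubmodule x.1.1} := by
  have hcomm (A B : strictUpper ι R) :
      Commute A.1 B.1 ↔ Commute (cayleyEquiv ι h2 A) (cayleyEquiv ι h2 B) := by
    rw [← commute_cayley_iff h2 (isUnit_det_one_sub A.2) (isUnit_det_one_sub B.2)]
    simp only [commute_iff_eq, Subtype.ext_iff, Units.ext_iff]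
    rfl
  have hfixed (C : symmetric ι R) (A : strictUpper ι R) :
      A.1 ∈ skewAdjointMatricesSubmodule C.1 ↔
        congruence (cayleyEquiv ι h2 A : GL ι R).valᵀ C = C := by
    rw [Subtype.ext_iff, coe_congruence, transpose_transpose, coe_cayleyEquiv,
      cayley_transpose_mul_mul_eq_iff h2 (isUnit_det_one_sub A.2)]
  refine (Nat.card_congr (((Equiv.refl _).prodCongr
    ((cayleyEquiv ι h2).prodCongr (cayleyEquiv ι h2))).subtypeEquiv fun x ↦ ?_)).symm
  exact and_congr (hcomm _ _) (and_congr (hfixed _ _) (hfixed _ _))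

theorem card_conjClasses_maximalUnipotent_mul {F : Type*} [Field F] [Finite F]
    (h2 : IsUnit (2 : F)) :
    Nat.card (ConjClasses (maximalUnipotent ι F)) * Nat.card (strictUpper ι F) =
      Nat.card {x : symmetric ι F × (strictUpper ι F × strictUpper ι F) //
        Commute x.2.1.1 x.2.2.1 ∧ x.2.1.1 ∈ skewAdjointMatricesSubmodule x.1.1 ∧
          x.2.2.1 ∈ skewAdjointMatricesSubmodule x.1.1} := by
  have hdual := card_commuting_eq_mul_card_fixed (B := symmetricTraceForm ι F)
    (symmetricTraceForm_nondegenerate h2)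
    (fun g h : unitriangular ι F ↦ Commute g h) (ρ := fun g ↦ congruence (g : GL ι F))
    (ρ' := fun g ↦ congruence (g : GL ι F).valᵀ)
    (fun g ↦ isAdjointPair_congruence_transpose _)
  rw [← card_commute_maximalUnipotent, card_comm_eq_card_conjClasses_mul_card,
    card_maximalUnipotent h2, card_fixed_eq_card_skewAdjoint h2, ← mul_assoc,
    mul_comm (Nat.card (symmetric ι F))] at hdual
  exact Nat.eq_of_mul_eq_mul_right Nat.card_pos hdual

end CommutingPairs

section FixedVector

theorem exists_notMem_forall_sub_mem {p : ℕ} [Fact p.Prime] {F V G : Type*} [Field F]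
    [AddCommGroup V] [Module F V] [Finite V] [Group G] (hG : IsPGroup p G)
    (hpF : p ∣ Nat.card F) (ρ : Representation F G V) {W : Submodule F V}
    (hW : ∀ g, W ≤ W.comap (ρ g)) (hne : W ≠ ⊤) :
    ∃ v ∉ W, ∀ g, ρ g v - v ∈ W := by
  have : Finite (V ⧸ W) := Finite.of_surjective _ W.mkQ_surjective
  let := MulAction.compHom (V ⧸ W) (ρ.quotient W hW)
  have hcard : p ∣ Nat.card (V ⧸ W) := by
    have := Submodule.Quotient.nontrivial_iff.2 hne
    rw [Module.natCard_eq_pow_finrank (K := F)]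
    exact dvd_pow hpF Module.finrank_pos.ne'
  obtain ⟨x, hfixed, hx⟩ := hG.exists_fixed_point_of_prime_dvd_card_of_fixed_point (V ⧸ W) hcard
    (a := 0) fun g ↦ map_zero (ρ.quotient W hW g)
  obtain ⟨v, rfl⟩ := W.mkQ_surjective x
  exact ⟨v, fun hv ↦ hx ((Submodule.Quotient.mk_eq_zero W).2 hv).symm,
    fun g ↦ (Submodule.Quotient.eq W).1 (hfixed g)⟩

end FixedVector

section Flag

variable {ι F : Type*} [LinearOrder ι] [Field F]

variable (F) in
/-- The step below `k` of the standard flag of isotropic subspaces, spanned by the basis vectors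
`Sum.inl i` with `i < k`. -/
def flag (k : ι) : Submodule F (ι ⊕ ι → F) where
  carrier := {v | (∀ i, k ≤ i → v (.inl i) = 0) ∧ ∀ i, v (.inr i) = 0}
  add_mem' := by
    rintro v w ⟨hv, hv'⟩ ⟨hw, hw'⟩
    exact ⟨fun i hi ↦ by simp [hv i hi, hw i hi], fun i ↦ by simp [hv' i, hw' i]⟩
  zero_mem' := ⟨fun _ _ ↦ rfl, fun _ ↦ rfl⟩
  smul_mem' := by
    rintro c v ⟨hv, hv'⟩
    exact ⟨fun i hi ↦ by simp [hv i hi], fun i ↦ by simp [hv' i]⟩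

theorem flag_mono : Monotone (flag F : ι → _) := fun _ _ h _ hv ↦
  ⟨fun i hi ↦ hv.1 i (h.trans hi), hv.2⟩

theorem single_inl_mem_flag_iff {i k : ι} :
    (Pi.single (.inl i) 1 : ι ⊕ ι → F) ∈ flag F k ↔ i < k := by
  refine ⟨fun h ↦ lt_of_not_ge fun hki ↦ by simpa using h.1 i hki, fun h ↦ ⟨fun j hj ↦ ?_, ?_⟩⟩
  · simp [(h.trans_le hj).ne']
  · simp

theorem flag_eq_span (k : ι) [Finite ι] :
    flag F k = .span F ((fun i ↦ Pi.single (.inl i) 1) '' Set.Iio k) := by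
  cases nonempty_fintype ι
  refine le_antisymm (fun v hv ↦ ?_) (Submodule.span_le.2 ?_)
  · have hsum : v = ∑ i, v (.inl i) • (Pi.single (.inl i) 1 : ι ⊕ ι → F) := by
      ext (j | j)
      · simp [Finset.sum_apply, Pi.single_apply]
      · simp [Finset.sum_apply, hv.2]
    rw [hsum]
    refine Submodule.sum_mem _ fun i _ ↦ ?_
    obtain hik | hki := lt_or_ge i k
    · exact Submodule.smul_mem _ _ (Submodule.subset_span ⟨i, hik, rfl⟩)
    · simp [hv.1 i hki]
  · rintro _ ⟨i, hi, rfl⟩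
    exact single_inl_mem_flag_iff.2 hi

end Flag

section Sylow

variable {ι F : Type*} [Fintype ι] [LinearOrder ι] [Field F]

theorem mem_maximalUnipotent_of_forall_sub_mem_flag {M : symplecticGroup ι F}
    (hM : ∀ k, M.1 *ᵥ Pi.single (.inl k) 1 - Pi.single (.inl k) 1 ∈ flag F k) :
    M ∈ maximalUnipotent ι F := by
  obtain ⟨M, hMsp⟩ := M
  have h₁₁ (i k) (hki : k ≤ i) : M.toBlocks₁₁ i k = (1 : Matrix ι ι F) i k := by
    simpa [toBlocks₁₁, Pi.single_apply, one_apply, sub_eq_zero] using (hM k).1 i hki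
  have h₂₁ : M.toBlocks₂₁ = 0 := by
    ext i k
    simpa [toBlocks₂₁] using (hM k).2 i
  have hfrom := fromBlocks_toBlocks M
  rw [h₂₁] at hfrom
  obtain ⟨g, S, hS, hgS⟩ := exists_eq_siegel (hfrom.symm ▸ hMsp)
  have hg : M.toBlocks₁₁ = g := (fromBlocks_inj.1 hgS).1
  refine ⟨g, fun i k hki ↦ ?_, S, hS, hfrom.symm.trans hgS⟩
  rw [Matrix.sub_apply, ← hg, h₁₁ i k hki, sub_self]

theorem inl_eq_zero_of_forall_sub_mem_flag {k : ι} {v : ι ⊕ ι → F}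
    (hv : ∀ M ∈ maximalUnipotent ι F, M.1 *ᵥ v - v ∈ flag F k) {i : ι} (hki : k < i) :
    v (.inl i) = 0 := by
  let g : GL ι F := ⟨transvection k i 1, transvection k i (-1),
    by simp [transvection_mul_transvection_same, hki.ne],
    by simp [transvection_mul_transvection_same, hki.ne]⟩
  have hg : g ∈ unitriangular ι F := fun a b hba ↦ by
    have : ¬(k = a ∧ i = b) := by rintro ⟨rfl, rfl⟩; exact hki.not_ge hba
    simp [g, transvection, this]
  have h := (hv _ (siegel_mem_maximalUnipotent hg isSymm_zero)).1 k le_rfl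
  simpa [siegel, fromBlocks_mulVec, g, transvection, add_mulVec, single_mulVec] using h

theorem inr_eq_zero_of_forall_sub_mem_flag {k : ι} {v : ι ⊕ ι → F}
    (hv : ∀ M ∈ maximalUnipotent ι F, M.1 *ᵥ v - v ∈ flag F k) (i : ι) :
    v (.inr i) = 0 := by
  have hshear {S : Matrix ι ι F} (hS : S.IsSymm) : (S *ᵥ (v ∘ .inr)) k = 0 := by
    have h := (hv _ (siegel_mem_maximalUnipotent (one_mem _) hS)).1 k le_rfl
    simpa [siegel, fromBlocks_mulVec] using h
  obtain rfl | hik := eq_or_ne i k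
  · have hS : (single i i (1 : F)).IsSymm := transpose_single ..
    simpa [single_mulVec] using hshear hS
  · have hS : (single k i (1 : F) + single i k 1).IsSymm := by
      simp [IsSymm, add_comm]
    simpa [single_mulVec, add_mulVec, hik.symm, hik] using hshear hS

theorem isPGroup_maximalUnipotent [Finite F] (h2 : IsUnit (2 : F)) {p : ℕ} [CharP F p] :
    IsPGroup p (maximalUnipotent ι F) := by
  cases nonempty_fintype F
  obtain ⟨n, -, hn⟩ := FiniteField.card F p
  refine IsPGroup.of_card (n := n * Module.finrank F (strictUpper ι F) +
    n * Module.finrank F (symmetric ι F)) ?_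
  rw [card_maximalUnipotent h2, Module.natCard_eq_pow_finrank (K := F) (V := strictUpper ι F),
    Module.natCard_eq_pow_finrank (K := F) (V := symmetric ι F),
    Nat.card_eq_fintype_card, hn, pow_add, pow_mul, pow_mul]

variable {p : ℕ} [Fact p.Prime]

theorem flag_le_comap_mulVecLin {Q : Subgroup (symplecticGroup ι F)} {k : ι}
    (hQ : ∀ i < k, ∀ M ∈ Q, M.1 *ᵥ Pi.single (.inl i) 1 - Pi.single (.inl i) 1 ∈ flag F i)
    {M : symplecticGroup ι F} (hM : M ∈ Q) : flag F k ≤ (flag F k).comap M.1.mulVecLin := by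
  rw [flag_eq_span, Submodule.span_le, ← flag_eq_span]
  rintro _ ⟨i, hik, rfl⟩
  have h := add_mem (flag_mono hik.le (hQ i hik M hM)) (single_inl_mem_flag_iff.2 hik)
  rwa [sub_add_cancel] at h

theorem mulVec_single_sub_mem_flag [Finite F] (hpF : p ∣ Nat.card F)
    {Q : Subgroup (symplecticGroup ι F)} (hQ : IsPGroup p Q) (hU : maximalUnipotent ι F ≤ Q)
    (k : ι) :
    ∀ M ∈ Q, M.1 *ᵥ Pi.single (.inl k) 1 - Pi.single (.inl k) 1 ∈ flag F k := by
  induction k using WellFoundedLT.induction with | _ k ih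
  have hinv {M} (hM : M ∈ Q) := flag_le_comap_mulVecLin ih hM
  let ρ : Representation F Q (ι ⊕ ι → F) :=
    (toLinAlgEquiv' : Matrix (ι ⊕ ι) (ι ⊕ ι) F ≃ₐ[F] _).toMonoidHom.comp
      ((symplecticGroup ι F).subtype.comp Q.subtype)
  have hne : flag F k ≠ ⊤ := fun h ↦
    lt_irrefl k (single_inl_mem_flag_iff.1 (h ▸ Submodule.mem_top))
  obtain ⟨v, hvk, hv⟩ := exists_notMem_forall_sub_mem hQ hpF ρ (fun M ↦ hinv M.2) hne
  have hvU : ∀ M ∈ maximalUnipotent ι F, M.1 *ᵥ v - v ∈ flag F k := fun M hM ↦ hv ⟨M, hU hM⟩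
  have hw : v - v (.inl k) • Pi.single (.inl k) 1 ∈ flag F k := by
    refine ⟨fun i hki ↦ ?_, fun i ↦ ?_⟩
    · obtain rfl | hki := hki.eq_or_lt
      · simp
      · simp [inl_eq_zero_of_forall_sub_mem_flag hvU hki, hki.ne']
    · simp [inr_eq_zero_of_forall_sub_mem_flag hvU i]
  have hvk0 : v (.inl k) ≠ 0 := fun h ↦ hvk (by simpa [h] using hw)
  intro M hM
  refine (Submodule.smul_mem_iff _ hvk0).1 ?_
  have h := sub_mem (hv ⟨M, hM⟩) (sub_mem (hinv hM hw) hw)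
  convert h using 1
  simp only [mulVecLin_apply, mulVec_sub, mulVec_smul, smul_sub]
  change _ = M.1 *ᵥ v - v - _
  abel

theorem nonempty_sylow_mulEquiv_maximalUnipotent [Finite F] (h2 : IsUnit (2 : F)) [CharP F p]
    (P : Sylow p (symplecticGroup ι F)) : Nonempty (P ≃* maximalUnipotent ι F) := by
  obtain ⟨Q, hQ⟩ := (isPGroup_maximalUnipotent (ι := ι) h2).exists_le_sylow
  have hpF : p ∣ Nat.card F := by
    cases nonempty_fintype F
    rw [Nat.card_eq_fintype_card, ← CharP.cast_eq_zero_iff F p, FiniteField.cast_card_eq_zero]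
  have hQU : (Q : Subgroup (symplecticGroup ι F)) = maximalUnipotent ι F :=
    le_antisymm (fun M hM ↦ mem_maximalUnipotent_of_forall_sub_mem_flag
      fun k ↦ mulVec_single_sub_mem_flag hpF Q.isPGroup' hQ k M hM) hQ
  exact ⟨(P.equiv Q).trans (MulEquiv.subgroupCongr hQU)⟩

end Sylow

section Counting

theorem sum_eq_add_mul_of_ne {α : Type*} [Fintype α] {n : ℕ} (hn : Nat.card α = n + 1) {g : α → ℕ}
    {a : α} {c : ℕ} (h : ∀ x ≠ a, g x = c) : ∑ x, g x = g a + n * c := by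
  classical
  rw [← Finset.add_sum_erase _ _ (Finset.mem_univ a),
    Finset.sum_congr rfl fun x hx ↦ h x (Finset.ne_of_mem_erase hx), Finset.sum_const,
    Finset.card_erase_of_mem (Finset.mem_univ a), Finset.card_univ, ← Nat.card_eq_fintype_card, hn,
    Nat.add_sub_cancel, smul_eq_mul]

theorem sum_ite_eq_add_mul {α : Type*} [Fintype α] [DecidableEq α] {n : ℕ}
    (hn : Nat.card α = n + 1) (a : α) (b c : ℕ) :
    ∑ x, (if x = a then b else c) = b + n * c := by
  rw [sum_eq_add_mul_of_ne hn (a := a) fun x hx ↦ if_neg hx, if_pos rfl]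

theorem sum_ite_and_eq {α : Type*} [Fintype α] [DecidableEq α] {n : ℕ} (hn : Nat.card α = n + 1)
    (P : Prop) [Decidable P] (a : α) (b c : ℕ) :
    ∑ x, (if P ∧ x = a then b else c) = if P then b + n * c else (n + 1) * c := by
  split_ifs with hP
  · simp only [hP, true_and, sum_ite_eq_add_mul hn]
  · simp [hP, ← hn]

theorem sum_const_eq_mul {α : Type*} [Fintype α] {n : ℕ} (hn : Nat.card α = n + 1) (c : ℕ) :
    ∑ _x : α, c = (n + 1) * c := by
  simp [← hn]

theorem card_subtype_prod_eq_sum {α β : Type*} [Fintype α] [Finite β] (P : α → β → Prop) :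
    Nat.card {x : α × β // P x.1 x.2} = ∑ a, Nat.card {b // P a b} := by
  rw [← Nat.card_sigma]
  exact Nat.card_congr (Equiv.subtypeProdEquivSigmaSubtype P)

theorem card_dotProduct_eq_zero {F : Type*} [Field F] [Finite F] [DecidableEq F] {m : ℕ}
    (a : Fin (m + 1) → F) :
    Nat.card {w : Fin (m + 1) → F // a ⬝ᵥ w = 0} =
      if a = 0 then Nat.card F ^ (m + 1) else Nat.card F ^ m := by
  split_ifs with ha
  · simp [ha, Nat.card_fun]
  · let φ : (Fin (m + 1) → F) →ₗ[F] F := dotProductBilin F F a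
    have hφ : Function.Surjective φ := LinearMap.surjective fun h ↦
      ha (dotProduct_eq_zero _ fun w ↦ LinearMap.congr_fun h w)
    have h := Submodule.card_eq_card_quotient_mul_card (LinearMap.ker φ)
    rw [Nat.card_congr (φ.quotKerEquivOfSurjective hφ).toEquiv, Nat.card_fun, Nat.card_fin,
      pow_succ'] at h
    exact (Nat.eq_of_mul_eq_mul_right Nat.card_pos ((mul_comm _ _).trans h)).symm

theorem card_dotProduct_family_eq_zero {F : Type*} [Field F] [Finite F] {v : ℕ}
    (hv : Nat.card F = v + 1) {X : Type*} [Finite X] {m : ℕ} (ℓ : X → Fin (m + 1) → F) :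
    Nat.card {y : X × (Fin (m + 1) → F) // ℓ y.1 ⬝ᵥ y.2 = 0} =
      (Nat.card X + v * Nat.card {x // ℓ x = 0}) * (v + 1) ^ m := by
  classical
  cases nonempty_fintype X
  have hsplit (x : X) : (if ℓ x = 0 then (v + 1) ^ (m + 1) else (v + 1) ^ m) =
      (v + 1) ^ m + if ℓ x = 0 then v * (v + 1) ^ m else 0 := by
    split_ifs <;> ring
  rw [card_subtype_prod_eq_sum fun (x : X) (w : Fin (m + 1) → F) ↦ ℓ x ⬝ᵥ w = 0]
  simp only [card_dotProduct_eq_zero, hv, hsplit]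
  rw [Finset.sum_add_distrib, Finset.sum_const, ← Finset.sum_filter, Finset.sum_const,
    Finset.card_univ, ← Nat.card_eq_fintype_card, ← Fintype.card_subtype,
    ← Nat.card_eq_fintype_card, smul_eq_mul, smul_eq_mul]
  ring

variable {F V : Type*} [Field F] [AddCommGroup V] [Module F V]

theorem card_smul_eq_smul [DecidableEq F] (s : F × F) :
    Nat.card {u : V × V // s.1 • u.2 = s.2 • u.1} =
      if s = 0 then Nat.card V ^ 2 else Nat.card V := by
  obtain ⟨s, t⟩ := s
  by_cases hs : s = 0
  · by_cases ht : t = 0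
    · simp [hs, ht, sq]
    · rw [if_neg (by simp [ht])]
      refine Nat.card_congr ⟨fun u ↦ u.1.2, fun w ↦ ⟨(0, w), by simp [hs]⟩,
        fun ⟨⟨u, w⟩, h⟩ ↦ ?_, fun w ↦ rfl⟩
      have hu : u = 0 := by simpa [hs, ht, eq_comm] using h
      simp [hu]
  · rw [if_neg (by simp [hs])]
    refine Nat.card_congr ⟨fun u ↦ u.1.1, fun u ↦ ⟨(u, s⁻¹ • t • u), smul_inv_smul₀ hs _⟩,
      fun ⟨⟨u, w⟩, h⟩ ↦ ?_, fun w ↦ rfl⟩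
    simp [← show s • w = t • u from h, hs]

theorem card_cross_smul_eq [Finite F] [Finite V] {v : ℕ} (hv : Nat.card F = v + 1) :
    Nat.card {x : (F × V) × (F × V) // x.1.1 • x.2.2 = x.2.1 • x.1.2} =
      Nat.card V * (Nat.card V + v * (v + 2)) := by
  classical
  cases nonempty_fintype F
  have hvF : Nat.card (F × F) = v * (v + 2) + 1 := by rw [Nat.card_prod, hv]; ring
  have hswap : Nat.card {x : (F × V) × (F × V) // x.1.1 • x.2.2 = x.2.1 • x.1.2} =
      Nat.card {x : (F × F) × (V × V) // x.1.1 • x.2.2 = x.1.2 • x.2.1} :=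
    Nat.card_congr ((Equiv.prodProdProdComm F V F V).subtypeEquiv fun _ ↦ Iff.rfl)
  rw [hswap, card_subtype_prod_eq_sum fun (s : F × F) (u : V × V) ↦ s.1 • u.2 = s.2 • u.1]
  simp only [card_smul_eq_smul]
  rw [sum_ite_eq_add_mul hvF]
  ring

end Counting

section CardPairs

variable {α β γ : Type*} {L : α → Prop} {R : α → α → Prop}

/-- The number of pairs of elements satisfying `L` that are related by `R`. -/
noncomputable def cardPairs (L : α → Prop) (R : α → α → Prop) : ℕ :=
  Nat.card {x : α × α // L x.1 ∧ L x.2 ∧ R x.1 x.2}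

theorem cardPairs_eq_cardPairs {L' : β → Prop} {R' : β → β → Prop} (f : β → α) (g : α → β)
    (hf : ∀ x, L' x → L (f x)) (hg : ∀ a, L a → L' (g a)) (hgf : Function.LeftInverse g f)
    (hfg : ∀ a, L a → f (g a) = a) (hR : ∀ x y, R (f x) (f y) ↔ R' x y) :
    cardPairs L R = cardPairs L' R' := by
  have hg₂ (a : {a : α × α // L a.1 ∧ L a.2 ∧ R a.1 a.2}) : R' (g a.1.1) (g a.1.2) := by
    rw [← hR, hfg _ a.2.1, hfg _ a.2.2.1]
    exact a.2.2.2
  exact Nat.card_congr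
    ⟨fun a ↦ ⟨(g a.1.1, g a.1.2), hg _ a.2.1, hg _ a.2.2.1, hg₂ a⟩,
      fun x ↦ ⟨(f x.1.1, f x.1.2), hf _ x.2.1, hf _ x.2.2.1, (hR _ _).2 x.2.2.2⟩,
      fun a ↦ Subtype.ext (Prod.ext (hfg _ a.2.1) (hfg _ a.2.2.1)),
      fun x ↦ Subtype.ext (Prod.ext (hgf _) (hgf _))⟩

theorem cardPairs_true (R : α → α → Prop) :
    cardPairs (fun _ ↦ True) R = Nat.card {x : α × α // R x.1 x.2} := by
  simp only [cardPairs, true_and]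

theorem cardPairs_eq_sq (f : β → α) (g : α → β) (hf : ∀ x, L (f x))
    (hgf : Function.LeftInverse g f) (hfg : ∀ a, L a → f (g a) = a)
    (hR : ∀ x y, R (f x) (f y)) : cardPairs L R = Nat.card β ^ 2 := by
  rw [cardPairs_eq_cardPairs (L' := fun _ ↦ True) (R' := fun _ _ ↦ True) f g (fun x _ ↦ hf x)
    (fun _ _ ↦ trivial) hgf hfg fun x y ↦ iff_true_intro (hR x y), cardPairs_true]
  simp [sq]

theorem cardPairs_eq_of_cross_smul {F V : Type*} [Field F] [AddCommGroup V] [Module F V] [Finite F]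
    [Finite V] {v : ℕ} (hv : Nat.card F = v + 1) (f : γ × F × V → α) (g : α → γ × F × V)
    (hf : ∀ x, L (f x)) (hgf : Function.LeftInverse g f) (hfg : ∀ a, L a → f (g a) = a)
    (hR : ∀ x y, R (f x) (f y) ↔ x.2.1 • y.2.2 = y.2.1 • x.2.2) :
    cardPairs L R = Nat.card γ ^ 2 * (Nat.card V * (Nat.card V + v * (v + 2))) := by
  rw [cardPairs_eq_cardPairs (L' := fun _ ↦ True) f g (fun x _ ↦ hf x) (fun _ _ ↦ trivial) hgf hfg
    hR, cardPairs_true, ← card_cross_smul_eq hv, sq, ← Nat.card_prod, ← Nat.card_prod]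
  exact Nat.card_congr ⟨fun x ↦ ((x.1.1.1, x.1.2.1), ⟨(x.1.1.2, x.1.2.2), x.2⟩),
    fun x ↦ ⟨((x.1.1, x.2.1.1), (x.1.2, x.2.1.2)), x.2.2⟩, fun _ ↦ rfl, fun _ ↦ rfl⟩

end CardPairs

section IsotropyRankThree

variable {F : Type*} [Field F]

/-- The condition `Aᵀ D + D A = 0` on a strictly upper triangular `3 × 3` matrix `A` with
coordinates `(a₂₃, a₂₄, a₃₄)`, where `D` is symmetric with rows indexed by `2, 3, 4`;
the diagonal equations are halved. -/
def IsSkewAdjoint₃ : F × F × F × F × F → F × F × F → Prop :=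
  fun (d₂₂, d₂₃, d₂₄, d₃₃, d₃₄) (a₂₃, a₂₄, a₃₄) ↦
  d₂₂ * a₂₃ = 0 ∧ d₂₂ * a₂₄ + d₂₃ * a₃₄ = 0 ∧ d₂₃ * a₂₃ = 0 ∧
  d₂₄ * a₂₃ + d₂₃ * a₂₄ + d₃₃ * a₃₄ = 0 ∧ d₂₄ * a₂₄ + d₃₄ * a₃₄ = 0

/-- The condition `A B = B A` in the coordinates of `IsSkewAdjoint₃`. -/
def Commutes₃ : F × F × F → F × F × F → Prop := fun (a₂₃, _, a₃₄) (b₂₃, _, b₃₄) ↦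
  a₂₃ * b₃₄ = b₂₃ * a₃₄

variable {v : ℕ}

theorem cardPairs₃_of_d₂₂_ne_zero (hv : Nat.card F = v + 1) [DecidableEq F]
    {d₂₂ : F} (h : d₂₂ ≠ 0) (d₂₃ d₂₄ d₃₃ d₃₄ : F) :
    cardPairs (IsSkewAdjoint₃ (d₂₂, d₂₃, d₂₄, d₃₃, d₃₄)) Commutes₃ =
      if d₃₃ = d₂₃ ^ 2 / d₂₂ ∧ d₃₄ = d₂₃ * d₂₄ / d₂₂ then (v + 1) ^ 2 else 1 := by
  split_ifs with hd
  · rw [cardPairs_eq_sq (α := F × F × F) (fun x : F ↦ (0, -(d₂₃ * x) / d₂₂, x))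
      (fun (_, _, a₃₄) ↦ a₃₄), hv]
    all_goals simp only [IsSkewAdjoint₃, Commutes₃, Function.LeftInverse, Prod.forall]; grind
  · rw [cardPairs_eq_sq (α := F × F × F) (fun _ : Unit ↦ (0, 0, 0)) (fun _ ↦ ())]
    · simp
    all_goals simp only [IsSkewAdjoint₃, Commutes₃, Function.LeftInverse, Prod.forall]; grind

theorem cardPairs₃_of_d₂₃_ne_zero {d₂₃ : F} (h : d₂₃ ≠ 0) (d₂₄ d₃₃ d₃₄ : F) :
    cardPairs (IsSkewAdjoint₃ (0, d₂₃, d₂₄, d₃₃, d₃₄)) Commutes₃ = 1 := by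
  rw [cardPairs_eq_sq (α := F × F × F) (fun _ : Unit ↦ (0, 0, 0)) (fun _ ↦ ())]
  · simp
  all_goals simp only [IsSkewAdjoint₃, Commutes₃, Function.LeftInverse, Prod.forall]; grind

theorem cardPairs₃_of_d₂₄_ne_zero (hv : Nat.card F = v + 1) {d₂₄ : F} (h : d₂₄ ≠ 0)
    (d₃₃ d₃₄ : F) :
    cardPairs (IsSkewAdjoint₃ (0, 0, d₂₄, d₃₃, d₃₄)) Commutes₃ = (v + 1) ^ 2 := by
  rw [cardPairs_eq_sq (α := F × F × F) (fun x : F ↦ (-(d₃₃ * x) / d₂₄, -(d₃₄ * x) / d₂₄, x))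
    (fun (_, _, a₃₄) ↦ a₃₄), hv]
  all_goals simp only [IsSkewAdjoint₃, Commutes₃, Function.LeftInverse, Prod.forall]; grind

theorem cardPairs₃_of_row_two_eq_zero [Finite F] (hv : Nat.card F = v + 1) [DecidableEq F]
    (d₃₃ d₃₄ : F) :
    cardPairs (IsSkewAdjoint₃ (0, 0, 0, d₃₃, d₃₄)) Commutes₃ =
      if d₃₃ = 0 ∧ d₃₄ = 0 then (v + 1) ^ 3 * ((v + 1) + v * (v + 2)) else (v + 1) ^ 4 := by
  split_ifs with hd
  · rw [cardPairs_eq_of_cross_smul hv (fun (x, s, u) ↦ (s, x, u))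
      (fun (a₂₃, a₂₄, a₃₄) ↦ (a₂₄, a₂₃, a₃₄)), hv]
    · ring
    all_goals
      simp only [IsSkewAdjoint₃, Commutes₃, Function.LeftInverse, Prod.forall, smul_eq_mul]; grind
  · rw [cardPairs_eq_sq (α := F × F × F) (fun x : F × F ↦ (x.1, x.2, 0))
      (fun (a₂₃, a₂₄, _) ↦ (a₂₃, a₂₄)), Nat.card_prod, hv]
    · ring
    all_goals simp only [IsSkewAdjoint₃, Commutes₃, Function.LeftInverse, Prod.forall]; grind

theorem sum_cardPairs₃ [Fintype F] (hv : Nat.card F = v + 1) :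
    ∑ D : F × F × F × F × F, cardPairs (IsSkewAdjoint₃ D) Commutes₃ =
      (v + 1) ^ 2 * (v ^ 4 + 8 * v ^ 3 + 16 * v ^ 2 + 9 * v + 1) := by
  have := Classical.decEq F
  have h₂₂ (d₂₂ : F) (h : d₂₂ ≠ 0) :
      ∑ D : F × F × F × F, cardPairs (IsSkewAdjoint₃ (d₂₂, D)) Commutes₃ =
        (v + 1) ^ 2 * ((v + 1) ^ 2 + v * (v + 2)) := by
    simp only [Fintype.sum_prod_type]
    simp only [cardPairs₃_of_d₂₂_ne_zero hv h, sum_ite_and_eq hv,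
      sum_ite_eq_add_mul hv, sum_const_eq_mul hv]
    ring
  have h₂₃ (d₂₃ : F) (h : d₂₃ ≠ 0) :
      ∑ D : F × F × F, cardPairs (IsSkewAdjoint₃ (0, d₂₃, D)) Commutes₃ = (v + 1) ^ 3 := by
    simp only [Fintype.sum_prod_type]
    simp only [cardPairs₃_of_d₂₃_ne_zero h, sum_const_eq_mul hv]
    ring
  have h₂₄ (d₂₄ : F) (h : d₂₄ ≠ 0) :
      ∑ D : F × F, cardPairs (IsSkewAdjoint₃ (0, 0, d₂₄, D)) Commutes₃ = (v + 1) ^ 4 := by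
    simp only [Fintype.sum_prod_type]
    simp only [cardPairs₃_of_d₂₄_ne_zero hv h, sum_const_eq_mul hv]
    ring
  have h₀ : ∑ D : F × F, cardPairs (IsSkewAdjoint₃ (0, 0, 0, D)) Commutes₃ =
      (v + 1) ^ 3 * (v + 1 + v * (v + 2)) + v * (v + 2) * (v + 1) ^ 4 := by
    simp only [Fintype.sum_prod_type]
    simp only [cardPairs₃_of_row_two_eq_zero hv, sum_ite_and_eq hv,
      sum_ite_eq_add_mul hv]
    ring
  rw [Fintype.sum_prod_type, sum_eq_add_mul_of_ne hv h₂₂, Fintype.sum_prod_type,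
    sum_eq_add_mul_of_ne hv h₂₃, Fintype.sum_prod_type, sum_eq_add_mul_of_ne hv h₂₄, h₀]
  ring

end IsotropyRankThree

section IsotropyRankFour

variable {F : Type*} [Field F]

/-- The condition `Aᵀ C + C A = 0` on a strictly upper triangular `4 × 4` matrix `A` with
coordinates `(a₁₂, a₁₃, a₁₄, a₂₃, a₂₄, a₃₄)`, where `C` is symmetric with first row
`(c₁₁, c₁₂, c₁₃, c₁₄)`; the diagonal equations are halved. The entry `c₄₄` of `C` does not
enter. -/
def IsSkewAdjoint₄ : F × F × F × F → F × F × F × F × F → F × F × F × F × F × F → Prop :=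
  fun (c₁₁, c₁₂, c₁₃, c₁₄) (c₂₂, c₂₃, c₂₄, c₃₃, c₃₄) (a₁₂, a₁₃, a₁₄, a₂₃, a₂₄, a₃₄) ↦
  c₁₁ * a₁₂ = 0 ∧ c₁₁ * a₁₃ + c₁₂ * a₂₃ = 0 ∧ c₁₁ * a₁₄ + c₁₂ * a₂₄ + c₁₃ * a₃₄ = 0 ∧
  c₁₂ * a₁₂ = 0 ∧ c₁₃ * a₁₂ + c₁₂ * a₁₃ + c₂₂ * a₂₃ = 0 ∧
  c₁₄ * a₁₂ + c₁₂ * a₁₄ + c₂₂ * a₂₄ + c₂₃ * a₃₄ = 0 ∧ c₁₃ * a₁₃ + c₂₃ * a₂₃ = 0 ∧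
  c₁₄ * a₁₃ + c₂₄ * a₂₃ + c₁₃ * a₁₄ + c₂₃ * a₂₄ + c₃₃ * a₃₄ = 0 ∧
  c₁₄ * a₁₄ + c₂₄ * a₂₄ + c₃₄ * a₃₄ = 0

/-- The condition `A B = B A` in the coordinates of `IsSkewAdjoint₄`. -/
def Commutes₄ : F × F × F × F × F × F → F × F × F × F × F × F → Prop :=
  fun (a₁₂, a₁₃, _, a₂₃, a₂₄, a₃₄) (b₁₂, b₁₃, _, b₂₃, b₂₄, b₃₄) ↦
  a₁₂ * b₂₃ = b₁₂ * a₂₃ ∧ a₂₃ * b₃₄ = b₂₃ * a₃₄ ∧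
  a₁₂ * b₂₄ + a₁₃ * b₃₄ = b₁₂ * a₂₄ + b₁₃ * a₃₄

variable {v : ℕ}

theorem isSkewAdjoint₄_iff_isSkewAdjoint₃ {c : F} (h : c ≠ 0) (x y z : F)
    (D : F × F × F × F × F) (a₁₂ a₁₃ a₁₄ a₂₃ a₂₄ a₃₄ : F) :
    IsSkewAdjoint₄ (c, c * x, c * y, c * z) D (a₁₂, a₁₃, a₁₄, a₂₃, a₂₄, a₃₄) ↔
      a₁₂ = 0 ∧ a₁₃ = -(x * a₂₃) ∧ a₁₄ = -(x * a₂₄ + y * a₃₄) ∧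
      IsSkewAdjoint₃ (D - c • (x * x, x * y, x * z, y * y, y * z)) (a₂₃, a₂₄, a₃₄) := by
  obtain ⟨c₂₂, c₂₃, c₂₄, c₃₃, c₃₄⟩ := D
  simp only [IsSkewAdjoint₃, IsSkewAdjoint₄, Prod.smul_mk, Prod.mk_sub_mk, smul_eq_mul]
  constructor
  · rintro ⟨e₁₂, e₁₃, e₁₄, -, e₂₃, e₂₄, e₃₃, e₃₄, e₄₄⟩
    obtain rfl : a₁₂ = 0 := (mul_eq_zero.1 e₁₂).resolve_left h
    obtain rfl : a₁₃ = -(x * a₂₃) := mul_left_cancel₀ h (by linear_combination e₁₃)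
    obtain rfl : a₁₄ = -(x * a₂₄ + y * a₃₄) := mul_left_cancel₀ h (by linear_combination e₁₄)
    exact ⟨rfl, rfl, rfl, by linear_combination e₂₃, by linear_combination e₂₄,
      by linear_combination e₃₃, by linear_combination e₃₄, by linear_combination e₄₄⟩
  · rintro ⟨rfl, rfl, rfl, e₂₃, e₂₄, e₃₃, e₃₄, e₄₄⟩
    exact ⟨by ring, by ring, by ring, by ring, by linear_combination e₂₃,
      by linear_combination e₂₄, by linear_combination e₃₃, by linear_combination e₃₄,
      by linear_combination e₄₄⟩

theorem cardPairs₄_eq_cardPairs₃_schurComplement {c : F} (h : c ≠ 0) (x y z : F)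
    (D : F × F × F × F × F) :
    cardPairs (IsSkewAdjoint₄ (c, c * x, c * y, c * z) D) Commutes₄ =
      cardPairs (IsSkewAdjoint₃ (D - c • (x * x, x * y, x * z, y * y, y * z))) Commutes₃ := by
  refine cardPairs_eq_cardPairs
    (fun (a₂₃, a₂₄, a₃₄) ↦ (0, -(x * a₂₃), -(x * a₂₄ + y * a₃₄), a₂₃, a₂₄, a₃₄))
    (fun (_, _, _, a₂₃, a₂₄, a₃₄) ↦ (a₂₃, a₂₄, a₃₄)) ?_ ?_ (fun _ ↦ rfl) ?_ ?_
  · exact fun _ ha ↦ (isSkewAdjoint₄_iff_isSkewAdjoint₃ h ..).2 ⟨rfl, rfl, rfl, ha⟩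
  · exact fun _ ha ↦ ((isSkewAdjoint₄_iff_isSkewAdjoint₃ h ..).1 ha).2.2.2
  · rintro _ ha
    obtain ⟨h₁₂, h₁₃, h₁₄, -⟩ := (isSkewAdjoint₄_iff_isSkewAdjoint₃ h ..).1 ha
    simp only [← h₁₂, ← h₁₃, ← h₁₄]
  · rintro ⟨a₂₃, a₂₄, a₃₄⟩ ⟨b₂₃, b₂₄, b₃₄⟩
    simp only [Commutes₃, Commutes₄]
    grind

theorem sum_cardPairs₄_of_c₁₁_ne_zero [Fintype F] (hv : Nat.card F = v + 1) {c₁₁ : F}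
    (h : c₁₁ ≠ 0) (c₁₂ c₁₃ c₁₄ : F) :
    ∑ D, cardPairs (IsSkewAdjoint₄ (c₁₁, c₁₂, c₁₃, c₁₄) D) Commutes₄ =
      (v + 1) ^ 2 * (v ^ 4 + 8 * v ^ 3 + 16 * v ^ 2 + 9 * v + 1) := by
  rw [← sum_cardPairs₃ hv, ← mul_div_cancel₀ c₁₂ h, ← mul_div_cancel₀ c₁₃ h,
    ← mul_div_cancel₀ c₁₄ h]
  simp only [cardPairs₄_eq_cardPairs₃_schurComplement h]
  exact (Equiv.subRight _).sum_comp fun D ↦ cardPairs (IsSkewAdjoint₃ D) Commutes₃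

theorem cardPairs₄_of_c₁₂_ne_zero (hv : Nat.card F = v + 1) [DecidableEq F] {c₁₂ : F}
    (h : c₁₂ ≠ 0) (c₁₃ c₁₄ c₂₂ c₂₃ c₂₄ c₃₃ c₃₄ : F) :
    cardPairs (IsSkewAdjoint₄ (0, c₁₂, c₁₃, c₁₄) (c₂₂, c₂₃, c₂₄, c₃₃, c₃₄)) Commutes₄ =
      if c₃₃ = (2 * c₁₃ * c₂₃ * c₁₂ - c₂₂ * c₁₃ ^ 2) / c₁₂ ^ 2 ∧
        c₃₄ = (c₁₃ * c₂₄ * c₁₂ + c₁₄ * c₂₃ * c₁₂ - c₂₂ * c₁₃ * c₁₄) / c₁₂ ^ 2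
      then (v + 1) ^ 2 else 1 := by
  split_ifs with hd
  · rw [cardPairs_eq_sq (α := F × F × F × F × F × F)
      (fun x : F ↦ (0, 0, (c₂₂ * (c₁₃ * x / c₁₂) - c₂₃ * x) / c₁₂, 0, -(c₁₃ * x) / c₁₂, x))
      (fun (_, _, _, _, _, a₃₄) ↦ a₃₄), hv]
    all_goals simp only [IsSkewAdjoint₄, Commutes₄, Function.LeftInverse, Prod.forall]; grind
  · rw [cardPairs_eq_sq (α := F × F × F × F × F × F) (fun _ : Unit ↦ (0, 0, 0, 0, 0, 0))
      (fun _ ↦ ())]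
    · simp
    all_goals simp only [IsSkewAdjoint₄, Commutes₄, Function.LeftInverse, Prod.forall]; grind

theorem cardPairs₄_of_c₁₃_ne_zero (hv : Nat.card F = v + 1) [DecidableEq F] {c₁₃ : F}
    (h : c₁₃ ≠ 0) (c₁₄ c₂₂ c₂₃ c₂₄ c₃₃ c₃₄ : F) :
    cardPairs (IsSkewAdjoint₄ (0, 0, c₁₃, c₁₄) (c₂₂, c₂₃, c₂₄, c₃₃, c₃₄)) Commutes₄ =
      if c₂₂ = 0 ∧ c₂₄ = c₁₄ * c₂₃ / c₁₃ then (v + 1) ^ 4 else (v + 1) ^ 2 := by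
  split_ifs with hd
  · rw [cardPairs_eq_sq (α := F × F × F × F × F × F)
      (fun (x, y) ↦ (0, -(x * c₂₃) / c₁₃, -(c₂₃ * y) / c₁₃, x, y, 0))
      (fun (_, _, _, a₂₃, a₂₄, _) ↦ (a₂₃, a₂₄)), Nat.card_prod, hv]
    · ring
    all_goals simp only [IsSkewAdjoint₄, Commutes₄, Function.LeftInverse, Prod.forall]; grind
  · rw [cardPairs_eq_sq (α := F × F × F × F × F × F)
      (fun x : F ↦
        (-(c₂₂ * x) / c₁₃, -(c₂₃ * x) / c₁₃, -(c₂₄ * x) / c₁₃, x, c₁₄ * x / c₁₃, 0))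
      (fun (_, _, _, a₂₃, _, _) ↦ a₂₃), hv]
    all_goals simp only [IsSkewAdjoint₄, Commutes₄, Function.LeftInverse, Prod.forall]; grind

theorem cardPairs₄_of_c₁₄_ne_zero [Finite F] (hv : Nat.card F = v + 1) [DecidableEq F] {c₁₄ : F}
    (h : c₁₄ ≠ 0) (c₂₂ c₂₃ c₂₄ c₃₃ c₃₄ : F) :
    cardPairs (IsSkewAdjoint₄ (0, 0, 0, c₁₄) (c₂₂, c₂₃, c₂₄, c₃₃, c₃₄)) Commutes₄ =
      if c₂₂ = 0 ∧ c₂₃ = 0 then (v + 1) ^ 3 * ((v + 1) + v * (v + 2)) else (v + 1) ^ 4 := by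
  split_ifs with hd
  · rw [cardPairs_eq_of_cross_smul hv (γ := F) (V := F) (fun (x, s, u) ↦
        (0, -(c₂₄ * s + c₃₃ * u) / c₁₄, -(c₂₄ * x + c₃₄ * u) / c₁₄, s, x, u))
      (fun (_, _, _, a₂₃, a₂₄, a₃₄) ↦ (a₂₄, a₂₃, a₃₄)), hv]
    · ring
    all_goals
      simp only [IsSkewAdjoint₄, Commutes₄, Function.LeftInverse, Prod.forall, smul_eq_mul]
      grind
  · rw [cardPairs_eq_sq (α := F × F × F × F × F × F) (fun (x, y) ↦
        (-(c₂₂ * x + c₂₃ * y) / c₁₄, -(c₂₃ * x + c₃₃ * y) / c₁₄, -(c₂₄ * x + c₃₄ * y) / c₁₄,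
          0, x, y))
      (fun (_, _, _, _, a₂₄, a₃₄) ↦ (a₂₄, a₃₄)), Nat.card_prod, hv]
    · ring
    all_goals simp only [IsSkewAdjoint₄, Commutes₄, Function.LeftInverse, Prod.forall]; grind

theorem cardPairs₄_of_c₂₂_ne_zero [Finite F] (hv : Nat.card F = v + 1) [DecidableEq F] {c₂₂ : F}
    (h : c₂₂ ≠ 0) (c₂₃ c₂₄ c₃₃ c₃₄ : F) :
    cardPairs (IsSkewAdjoint₄ (0, 0, 0, 0) (c₂₂, c₂₃, c₂₄, c₃₃, c₃₄)) Commutes₄ =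
      if c₃₃ = c₂₃ ^ 2 / c₂₂ ∧ c₃₄ = c₂₃ * c₂₄ / c₂₂
      then (v + 1) ^ 5 * ((v + 1) + v * (v + 2)) else (v + 1) ^ 6 := by
  split_ifs with hd
  · rw [cardPairs_eq_of_cross_smul hv (γ := F × F) (V := F) (fun ((x, y), s, u) ↦
        (x, s + c₂₃ * x / c₂₂, y, 0, -(c₂₃ * u) / c₂₂, u))
      (fun (a₁₂, a₁₃, a₁₄, _, _, a₃₄) ↦ ((a₁₂, a₁₄), a₁₃ - c₂₃ * a₁₂ / c₂₂, a₃₄)),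
      Nat.card_prod, hv]
    · ring
    all_goals
      simp only [IsSkewAdjoint₄, Commutes₄, Function.LeftInverse, Prod.forall, smul_eq_mul]
      grind
  · rw [cardPairs_eq_sq (α := F × F × F × F × F × F) (fun (x, y, z) ↦ (x, y, z, 0, 0, 0))
      (fun (a₁₂, a₁₃, a₁₄, _, _, _) ↦ (a₁₂, a₁₃, a₁₄)), Nat.card_prod, Nat.card_prod, hv]
    · ring
    all_goals simp only [IsSkewAdjoint₄, Commutes₄, Function.LeftInverse, Prod.forall]; grind

theorem cardPairs₄_of_c₂₃_ne_zero (hv : Nat.card F = v + 1) {c₂₃ : F} (h : c₂₃ ≠ 0)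
    (c₂₄ c₃₃ c₃₄ : F) :
    cardPairs (IsSkewAdjoint₄ (0, 0, 0, 0) (0, c₂₃, c₂₄, c₃₃, c₃₄)) Commutes₄ = (v + 1) ^ 6 := by
  rw [cardPairs_eq_sq (α := F × F × F × F × F × F) (fun (x, y, z) ↦ (x, y, z, 0, 0, 0))
    (fun (a₁₂, a₁₃, a₁₄, _, _, _) ↦ (a₁₂, a₁₃, a₁₄)), Nat.card_prod, Nat.card_prod, hv]
  · ring
  all_goals simp only [IsSkewAdjoint₄, Commutes₄, Function.LeftInverse, Prod.forall]; grind

theorem cardPairs₄_of_c₂₄_ne_zero [Finite F] (hv : Nat.card F = v + 1) [DecidableEq F] {c₂₄ : F}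
    (h : c₂₄ ≠ 0) (c₃₃ c₃₄ : F) :
    cardPairs (IsSkewAdjoint₄ (0, 0, 0, 0) (0, 0, c₂₄, c₃₃, c₃₄)) Commutes₄ =
      if c₃₃ = 0 then (v + 1) ^ 5 * ((v + 1) + v * (v + 2))
      else (v + 1) ^ 4 * ((v + 1) ^ 2 + v * (v + 2)) := by
  split_ifs with hd
  · rw [cardPairs_eq_of_cross_smul hv (γ := F × F) (V := F) (fun ((x, y), s, u) ↦
        (x, s + c₃₄ * x / c₂₄, y, 0, -(c₃₄ * u) / c₂₄, u))
      (fun (a₁₂, a₁₃, a₁₄, _, _, a₃₄) ↦ ((a₁₂, a₁₄), a₁₃ - c₃₄ * a₁₂ / c₂₄, a₃₄)),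
      Nat.card_prod, hv]
    · ring
    all_goals
      simp only [IsSkewAdjoint₄, Commutes₄, Function.LeftInverse, Prod.forall, smul_eq_mul]
      grind
  · rw [cardPairs_eq_of_cross_smul hv (γ := F) (V := F × F) (fun (y, s, x, u) ↦
        (x, u + c₃₄ * x / c₂₄, y, -(c₃₃ * s) / c₂₄, -(c₃₄ * s) / c₂₄, s))
      (fun (a₁₂, a₁₃, a₁₄, _, _, a₃₄) ↦ (a₁₄, a₃₄, a₁₂, a₁₃ - c₃₄ * a₁₂ / c₂₄)),
      Nat.card_prod, hv]
    · ring
    all_goals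
      simp only [IsSkewAdjoint₄, Commutes₄, Function.LeftInverse, Prod.forall, Prod.smul_mk,
        Prod.mk.injEq, smul_eq_mul]
      grind

theorem cardPairs₄_of_c₃₃_c₃₄_ne_zero [Finite F] (hv : Nat.card F = v + 1) {c₃₃ c₃₄ : F}
    (h : (c₃₃, c₃₄) ≠ 0) :
    cardPairs (IsSkewAdjoint₄ (0, 0, 0, 0) (0, 0, 0, c₃₃, c₃₄)) Commutes₄ =
      (v + 1) ^ 6 * ((v + 1) ^ 2 + v * (v + 2)) := by
  rw [ne_eq, Prod.mk_eq_zero] at h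
  rw [cardPairs_eq_of_cross_smul hv (γ := F × F) (V := F × F) (fun ((y, z), s, x, u) ↦
      (s, y, z, x, u, 0))
    (fun (a₁₂, a₁₃, a₁₄, a₂₃, a₂₄, _) ↦ ((a₁₃, a₁₄), a₁₂, a₂₃, a₂₄)), Nat.card_prod, hv]
  · ring
  all_goals
    simp only [IsSkewAdjoint₄, Commutes₄, Function.LeftInverse, Prod.forall, Prod.smul_mk,
      Prod.mk.injEq, smul_eq_mul]
    grind

/-- The coefficients, as a linear form in `(b₂₄, a₂₄, b₁₃, a₁₃)`, of the last equation of
`Commutes₄` for given `x = ((a₂₃, a₁₂, a₃₄), (b₂₃, b₁₂, b₃₄))`. -/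
def commutationForm (x : (F × F × F) × (F × F × F)) : Fin 4 → F :=
  ![x.1.2.1, -x.2.2.1, -x.1.2.2, x.2.2.2]

theorem commutationForm_eq_zero_iff {x : (F × F × F) × (F × F × F)} :
    commutationForm x = 0 ↔ x.1.2 = 0 ∧ x.2.2 = 0 := by
  simp [commutationForm, Prod.ext_iff, and_assoc, and_left_comm]

theorem cardPairs₄_zero_eq_card_commutationForm :
    cardPairs (IsSkewAdjoint₄ (0, 0, 0, 0) ((0 : F), 0, 0, 0, 0)) Commutes₄ =
      Nat.card ((F × F) ×
        {y : {x : (F × F × F) × (F × F × F) // x.1.1 • x.2.2 = x.2.1 • x.1.2} × (Fin 4 → F) //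
          commutationForm y.1.1 ⬝ᵥ y.2 = 0}) := by
  refine Nat.card_congr
    ⟨fun ⟨((a₁₂, a₁₃, a₁₄, a₂₃, a₂₄, a₃₄), (b₁₂, b₁₃, b₁₄, b₂₃, b₂₄, b₃₄)), h⟩ ↦
      ((a₁₄, b₁₄), ⟨(⟨((a₂₃, a₁₂, a₃₄), (b₂₃, b₁₂, b₃₄)), ?_⟩, ![b₂₄, a₂₄, b₁₃, a₁₃]), ?_⟩),
    fun ⟨(a₁₄, b₁₄), ⟨(⟨((a₂₃, a₁₂, a₃₄), (b₂₃, b₁₂, b₃₄)), h⟩, w), h'⟩⟩ ↦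
      ⟨((a₁₂, w 3, a₁₄, a₂₃, w 1, a₃₄), (b₁₂, w 2, b₁₄, b₂₃, w 0, b₃₄)), ?_⟩,
    ?_, ?_⟩
  · obtain ⟨-, -, h₁, h₂, -⟩ := h
    simp only [Prod.smul_mk, smul_eq_mul, Prod.mk.injEq]
    exact ⟨by linear_combination -h₁, h₂⟩
  · obtain ⟨-, -, -, -, h₃⟩ := h
    simp only [dotProduct, Fin.sum_univ_four, commutationForm, cons_val]
    linear_combination h₃
  · simp only [Prod.smul_mk, smul_eq_mul, Prod.mk.injEq] at h
    simp only [dotProduct, Fin.sum_univ_four, commutationForm, cons_val] at h'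
    simp only [IsSkewAdjoint₄, Commutes₄, zero_mul, add_zero,
      and_self, true_and]
    exact ⟨by linear_combination -h.1, h.2, by linear_combination h'⟩
  · rintro ⟨⟨⟨a₁₂, a₁₃, a₁₄, a₂₃, a₂₄, a₃₄⟩, b₁₂, b₁₃, b₁₄, b₂₃, b₂₄, b₃₄⟩, h⟩
    rfl
  · rintro ⟨⟨a₁₄, b₁₄⟩, ⟨⟨⟨⟨⟨a₂₃, a₁₂, a₃₄⟩, b₂₃, b₁₂, b₃₄⟩, h⟩, w⟩, h'⟩⟩
    simp only [Prod.mk.injEq, Subtype.mk.injEq, true_and]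
    ext i; fin_cases i <;> rfl

theorem card_commutationForm_eq_zero :
    Nat.card {x : {x : (F × F × F) × (F × F × F) // x.1.1 • x.2.2 = x.2.1 • x.1.2} //
      commutationForm x.1 = 0} = Nat.card F ^ 2 := by
  rw [sq, ← Nat.card_prod]
  refine Nat.card_congr ⟨fun x ↦ (x.1.1.1.1, x.1.1.2.1),
    fun s ↦ ⟨⟨((s.1, 0), (s.2, 0)), by simp⟩, commutationForm_eq_zero_iff.2 ⟨rfl, rfl⟩⟩,
    fun x ↦ ?_, fun _ ↦ rfl⟩
  obtain ⟨h₁, h₂⟩ := commutationForm_eq_zero_iff.1 x.2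
  exact Subtype.ext (Subtype.ext (Prod.ext (Prod.ext rfl h₁.symm) (Prod.ext rfl h₂.symm)))

theorem cardPairs₄_zero [Finite F] (hv : Nat.card F = v + 1) :
    cardPairs (IsSkewAdjoint₄ (0, 0, 0, 0) ((0 : F), 0, 0, 0, 0)) Commutes₄ =
      (v + 1) ^ 7 * (2 * v ^ 2 + 5 * v + 1) := by
  rw [cardPairs₄_zero_eq_card_commutationForm, Nat.card_prod,
    card_dotProduct_family_eq_zero hv fun x : Subtype _ ↦ commutationForm x.1,
    card_cross_smul_eq hv, card_commutationForm_eq_zero, Nat.card_prod, hv]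
  ring

section RowSums

variable [Fintype F]

theorem sum_cardPairs₄_of_c₁₂_ne_zero (hv : Nat.card F = v + 1) {c₁₂ : F} (h : c₁₂ ≠ 0) :
    ∑ r : F × F, ∑ D, cardPairs (IsSkewAdjoint₄ (0, c₁₂, r) D) Commutes₄ =
      (v + 1) ^ 5 * ((v + 1) ^ 2 + v * (v + 2)) := by
  have := Classical.decEq F
  simp only [Fintype.sum_prod_type]
  simp only [cardPairs₄_of_c₁₂_ne_zero hv h, sum_ite_and_eq hv, sum_ite_eq_add_mul hv,
    sum_const_eq_mul hv]
  ring

theorem sum_cardPairs₄_of_c₁₃_ne_zero (hv : Nat.card F = v + 1) {c₁₃ : F} (h : c₁₃ ≠ 0) :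
    ∑ c₁₄, ∑ D, cardPairs (IsSkewAdjoint₄ (0, 0, c₁₃, c₁₄) D) Commutes₄ =
      (v + 1) ^ 6 * ((v + 1) ^ 2 + v * (v + 2)) := by
  have := Classical.decEq F
  simp only [Fintype.sum_prod_type]
  simp only [cardPairs₄_of_c₁₃_ne_zero hv h, sum_const_eq_mul hv, mul_ite, sum_ite_and_eq hv,
    sum_ite_eq_add_mul hv]
  ring

theorem sum_cardPairs₄_of_c₁₄_ne_zero (hv : Nat.card F = v + 1) {c₁₄ : F} (h : c₁₄ ≠ 0) :
    ∑ D, cardPairs (IsSkewAdjoint₄ (0, 0, 0, c₁₄) D) Commutes₄ =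
      (v + 1) ^ 6 * (v ^ 3 + 4 * v ^ 2 + 5 * v + 1) := by
  have := Classical.decEq F
  simp only [Fintype.sum_prod_type]
  simp only [cardPairs₄_of_c₁₄_ne_zero hv h, sum_const_eq_mul hv, mul_ite, sum_ite_and_eq hv,
    sum_ite_eq_add_mul hv]
  ring

theorem sum_cardPairs₄_of_row_one_eq_zero (hv : Nat.card F = v + 1) :
    ∑ D, cardPairs (IsSkewAdjoint₄ ((0 : F), 0, 0, 0) D) Commutes₄ =
      (v + 1) ^ 5 * (v ^ 6 + 9 * v ^ 5 + 33 * v ^ 4 + 55 * v ^ 3 + 40 * v ^ 2 + 12 * v + 1) := by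
  have := Classical.decEq F
  have hvF : Nat.card (F × F) = v * (v + 2) + 1 := by rw [Nat.card_prod, hv]; ring
  have h₂₂ (c₂₂ : F) (h : c₂₂ ≠ 0) : ∑ D : F × F × F × F,
      cardPairs (IsSkewAdjoint₄ (0, 0, 0, 0) (c₂₂, D)) Commutes₄ =
        (v + 1) ^ 7 * ((v + 1) + v * (v + 2)) + v * (v + 2) * (v + 1) ^ 8 := by
    simp only [Fintype.sum_prod_type]
    simp only [cardPairs₄_of_c₂₂_ne_zero hv h, sum_ite_and_eq hv, sum_ite_eq_add_mul hv,
      sum_const_eq_mul hv]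
    ring
  have h₂₃ (c₂₃ : F) (h : c₂₃ ≠ 0) : ∑ D : F × F × F,
      cardPairs (IsSkewAdjoint₄ (0, 0, 0, 0) (0, c₂₃, D)) Commutes₄ = (v + 1) ^ 9 := by
    simp only [Fintype.sum_prod_type]
    simp only [cardPairs₄_of_c₂₃_ne_zero hv h, sum_const_eq_mul hv]
    ring
  have h₂₄ (c₂₄ : F) (h : c₂₄ ≠ 0) : ∑ D : F × F,
      cardPairs (IsSkewAdjoint₄ (0, 0, 0, 0) (0, 0, c₂₄, D)) Commutes₄ =
        (v + 1) ^ 6 * ((v + 1) + v * (v + 2)) +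
          v * (v + 1) ^ 5 * ((v + 1) ^ 2 + v * (v + 2)) := by
    simp only [Fintype.sum_prod_type]
    simp only [cardPairs₄_of_c₂₄_ne_zero hv h, sum_const_eq_mul hv, mul_ite, sum_ite_eq_add_mul hv]
    ring
  have h₀ : ∑ D : F × F, cardPairs (IsSkewAdjoint₄ (0, 0, 0, 0) (0, 0, 0, D)) Commutes₄ =
      (v + 1) ^ 7 * (2 * v ^ 2 + 5 * v + 1) +
        v * (v + 2) * ((v + 1) ^ 6 * ((v + 1) ^ 2 + v * (v + 2))) := by
    rw [sum_eq_add_mul_of_ne hvF fun _ h ↦ cardPairs₄_of_c₃₃_c₃₄_ne_zero hv h, ← cardPairs₄_zero hv]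
    rfl
  rw [Fintype.sum_prod_type, sum_eq_add_mul_of_ne hv h₂₂, Fintype.sum_prod_type,
    sum_eq_add_mul_of_ne hv h₂₃, Fintype.sum_prod_type, sum_eq_add_mul_of_ne hv h₂₄, h₀]
  ring

theorem sum_cardPairs₄ (hv : Nat.card F = v + 1) :
    ∑ r : F × F × F × F, ∑ D, cardPairs (IsSkewAdjoint₄ r D) Commutes₄ =
      (v + 1) ^ 5 *
        (v ^ 6 + 11 * v ^ 5 + 48 * v ^ 4 + 88 * v ^ 3 + 64 * v ^ 2 + 16 * v + 1) := by
  have h₁₁ (c₁₁ : F) (h : c₁₁ ≠ 0) : ∑ r : F × F × F, ∑ D,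
      cardPairs (IsSkewAdjoint₄ (c₁₁, r) D) Commutes₄ =
        (v + 1) ^ 5 * (v ^ 4 + 8 * v ^ 3 + 16 * v ^ 2 + 9 * v + 1) := by
    simp only [Fintype.sum_prod_type (α₁ := F) (α₂ := F × F),
      Fintype.sum_prod_type (α₁ := F) (α₂ := F)]
    simp only [sum_cardPairs₄_of_c₁₁_ne_zero hv h, sum_const_eq_mul hv]
    ring
  rw [Fintype.sum_prod_type, sum_eq_add_mul_of_ne hv h₁₁, Fintype.sum_prod_type,
    sum_eq_add_mul_of_ne hv fun _ ↦ sum_cardPairs₄_of_c₁₂_ne_zero hv, Fintype.sum_prod_type,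
    sum_eq_add_mul_of_ne hv fun _ ↦ sum_cardPairs₄_of_c₁₃_ne_zero hv,
    sum_eq_add_mul_of_ne hv fun _ ↦ sum_cardPairs₄_of_c₁₄_ne_zero hv,
    sum_cardPairs₄_of_row_one_eq_zero hv]
  ring

end RowSums

end IsotropyRankFour

section Coordinates

variable (R : Type*) [CommRing R]

/-- The coordinates of `IsSkewAdjoint₄` on the strictly upper triangular matrices. -/
@[simps]
def strictUpperEquiv₄ : R × R × R × R × R × R ≃ strictUpper (Fin 4) R where
  toFun := fun (a₁₂, a₁₃, a₁₄, a₂₃, a₂₄, a₃₄) ↦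
    ⟨!![0, a₁₂, a₁₃, a₁₄; 0, 0, a₂₃, a₂₄; 0, 0, 0, a₃₄; 0, 0, 0, 0], by
      simp [mem_strictUpper, Fin.forall_fin_succ]⟩
  invFun A := (A.1 0 1, A.1 0 2, A.1 0 3, A.1 1 2, A.1 1 3, A.1 2 3)
  left_inv _ := rfl
  right_inv := fun ⟨A, hA⟩ ↦ by
    simp only [mem_strictUpper, Fin.forall_fin_succ] at hA
    ext i j
    fin_cases i <;> fin_cases j <;> simp_all

/-- The coordinates of `IsSkewAdjoint₄` on the symmetric matrices, completed by the last diagonal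
entry `c₄₄`. -/
@[simps]
def symmetricEquiv₄ : ((R × R × R × R) × (R × R × R × R × R)) × R ≃ symmetric (Fin 4) R where
  toFun := fun (((c₁₁, c₁₂, c₁₃, c₁₄), (c₂₂, c₂₃, c₂₄, c₃₃, c₃₄)), c₄₄) ↦
    ⟨!![c₁₁, c₁₂, c₁₃, c₁₄; c₁₂, c₂₂, c₂₃, c₂₄; c₁₃, c₂₃, c₃₃, c₃₄; c₁₄, c₂₄, c₃₄, c₄₄], by
      simp [mem_symmetric, Matrix.IsSymm.ext_iff, Fin.forall_fin_succ]⟩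
  invFun C := (((C.1 0 0, C.1 0 1, C.1 0 2, C.1 0 3),
    (C.1 1 1, C.1 1 2, C.1 1 3, C.1 2 2, C.1 2 3)), C.1 3 3)
  left_inv _ := rfl
  right_inv := fun ⟨C, hC⟩ ↦ by
    ext i j
    fin_cases i <;> fin_cases j <;> first | rfl | exact hC.apply ..

end Coordinates

section CommutingPairsRankFour

variable {F : Type*} [Field F]

theorem commute_strictUpperEquiv₄_iff {a b : F × F × F × F × F × F} :
    Commute (strictUpperEquiv₄ F a).1 (strictUpperEquiv₄ F b).1 ↔ Commutes₄ a b := by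
  simp only [commute_iff_eq, strictUpperEquiv₄_apply_coe, cons_mul, vecMul_cons, head_cons,
    tail_cons, smul_cons, smul_eq_mul, zero_smul, mul_zero, smul_empty, empty_vecMul, add_cons,
    empty_add_empty, add_zero, zero_add, empty_mul, EmbeddingLike.apply_eq_iff_eq, vecCons_inj,
    and_true, true_and, Commutes₄, Equiv.symm_apply_apply]
  grind

theorem mem_skewAdjointMatricesSubmodule_symmetricEquiv₄_iff (h2 : (2 : F) ≠ 0)
    {r : F × F × F × F} {D : F × F × F × F × F} {c : F} {a : F × F × F × F × F × F} :
    (strictUpperEquiv₄ F a).1 ∈ skewAdjointMatricesSubmodule (symmetricEquiv₄ F ((r, D), c)).1 ↔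
      IsSkewAdjoint₄ r D a := by
  rw [mem_skewAdjointMatricesSubmodule_iff (symmetricEquiv₄ F ((r, D), c)).2]
  simp only [symmetricEquiv₄_apply_coe, strictUpperEquiv₄_apply_coe, cons_mul, vecMul_cons,
    head_cons, smul_cons, smul_eq_mul, mul_zero, smul_empty, tail_cons, empty_vecMul, add_zero,
    add_cons, ← two_mul, empty_add_empty, empty_mul, Equiv.symm_apply_apply, of_apply, cons_val',
    cons_val_fin_one, Fin.forall_fin_succ, cons_val_zero, cons_val_succ, forall_const,
    mul_eq_zero, true_and, zero_add, h2, false_or, IsSkewAdjoint₄]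
  grind

theorem card_strictUpper_four : Nat.card (strictUpper (Fin 4) F) = Nat.card F ^ 6 := by
  rw [← Nat.card_congr (strictUpperEquiv₄ F)]
  simp only [Nat.card_prod]
  ring

theorem card_commuting_skewAdjoint_four [Finite F] (h2 : (2 : F) ≠ 0) {v : ℕ}
    (hv : Nat.card F = v + 1) :
    Nat.card {x : symmetric (Fin 4) F × (strictUpper (Fin 4) F × strictUpper (Fin 4) F) //
      Commute x.2.1.1 x.2.2.1 ∧ x.2.1.1 ∈ skewAdjointMatricesSubmodule x.1.1 ∧
        x.2.2.1 ∈ skewAdjointMatricesSubmodule x.1.1} =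
      (v + 1) ^ 6 *
        (v ^ 6 + 11 * v ^ 5 + 48 * v ^ 4 + 88 * v ^ 3 + 64 * v ^ 2 + 16 * v + 1) := by
  cases nonempty_fintype F
  let e := (symmetricEquiv₄ F).prodCongr ((strictUpperEquiv₄ F).prodCongr (strictUpperEquiv₄ F))
  let S : ((F × F × F × F) × (F × F × F × F × F)) × F →
    (F × F × F × F × F × F) × (F × F × F × F × F × F) → Prop := fun C x ↦
      IsSkewAdjoint₄ C.1.1 C.1.2 x.1 ∧ IsSkewAdjoint₄ C.1.1 C.1.2 x.2 ∧ Commutes₄ x.1 x.2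
  calc
    _ = Nat.card {x : _ × _ // S x.1 x.2} := by
      refine (Nat.card_congr (e.subtypeEquiv fun x ↦ ?_)).symm
      obtain ⟨⟨⟨r, D⟩, c⟩, a, b⟩ := x
      simp only [e, S, Equiv.prodCongr_apply, Prod.map_apply, commute_strictUpperEquiv₄_iff,
        mem_skewAdjointMatricesSubmodule_symmetricEquiv₄_iff h2]
      tauto
    _ = ∑ C : (F × F × F × F) × (F × F × F × F × F), ∑ _c : F,
        cardPairs (IsSkewAdjoint₄ C.1 C.2) Commutes₄ := by
      rw [card_subtype_prod_eq_sum, Fintype.sum_prod_type]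
      rfl
    _ = (v + 1) * ∑ r, ∑ D, cardPairs (IsSkewAdjoint₄ r D) Commutes₄ := by
      simp only [sum_const_eq_mul hv, ← Finset.mul_sum]
      rw [Fintype.sum_prod_type]
    _ = _ := by
      rw [sum_cardPairs₄ hv]
      ring

theorem card_conjClasses_maximalUnipotent_four [Finite F] (h2 : IsUnit (2 : F)) {v : ℕ}
    (hv : Nat.card F = v + 1) :
    Nat.card (ConjClasses (maximalUnipotent (Fin 4) F)) =
      v ^ 6 + 11 * v ^ 5 + 48 * v ^ 4 + 88 * v ^ 3 + 64 * v ^ 2 + 16 * v + 1 := by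
  have h := card_conjClasses_maximalUnipotent_mul (ι := Fin 4) h2
  rw [card_commuting_skewAdjoint_four h2.ne_zero hv, card_strictUpper_four, hv, mul_comm] at h
  exact Nat.eq_of_mul_eq_mul_left (by positivity) h

end CommutingPairsRankFour

theorem card_conjClasses_congr {G H : Type*} [Group G] [Group H] (e : G ≃* H) :
    Nat.card (ConjClasses G) = Nat.card (ConjClasses H) := by
  refine Nat.card_congr (Quotient.congr e.toEquiv fun a b ↦ ?_)
  change IsConj a b ↔ IsConj (e a) (e b)
  exact ⟨e.toMonoidHom.map_isConj, fun h ↦ by simpa using! e.symm.toMonoidHom.map_isConj h⟩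

end SpUnipotent

/-- The number of conjugacy classes of a Sylow `p`-subgroup of `Sp_8(F_q)`,
for `p` an odd prime and `q` a power of `p`, written in `v = q - 1`. -/
theorem card_conjClasses_sylow_sp8 (p q : ℕ) (hp : p.Prime) (hodd : Odd p)
    (hq : ∃ n : ℕ, 0 < n ∧ q = p ^ n)
    (F : Type*) [Field F] [Fintype F] (hF : Fintype.card F = q)
    (P : Sylow p (Matrix.symplecticGroup (Fin 4) F)) (v : ℕ) (hv : v = q - 1) :
    Nat.card (ConjClasses (P : Subgroup (Matrix.symplecticGroup (Fin 4) F))) =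
      v ^ 6 + 11 * v ^ 5 + 48 * v ^ 4 + 88 * v ^ 3 + 64 * v ^ 2 + 16 * v + 1 := by
  obtain ⟨n, -, rfl⟩ := hq
  have hcard : Nat.card F = v + 1 := by
    rw [Nat.card_eq_fintype_card, hF, hv, Nat.sub_add_cancel (Nat.one_le_pow _ _ hp.pos)]
  have : Fact p.Prime := ⟨hp⟩
  have : CharP F p := charP_of_card_eq_prime_pow hF
  have h2 : IsUnit (2 : F) :=
    (Ring.two_ne_zero (ringChar.eq F p ▸ hodd.ne_two_of_dvd_nat dvd_rfl)).isUnit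
  obtain ⟨e⟩ := SpUnipotent.nonempty_sylow_mulEquiv_maximalUnipotent h2 P
  exact (SpUnipotent.card_conjClasses_congr e).trans
    (SpUnipotent.card_conjClasses_maximalUnipotent_four h2 hcard)
end
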